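/- arXiv:2011.00590 — 4 statements merged into one kernel-verified Lean document; each statement's English description precedes it below -/
import Mathlib

section
/- Let K be a quadratic field. If x, y ∈ K satisfy y^2 = -(2x^4 - 14x^3 + 21x^2 + 28x + 7), then x is rational. (This is the main theorem for p = 7: every quadratic point on this affine model of the non-split Cartan modular curve X_ns(7) maps under the degeneracy map (x,y) ↦ x to a rational point of X_ns^+(7) ≅ ℙ^1, i.e. X_ns(7) has no exceptional quadratic points.) -/
/-!
If `x` is a quadratic irrationality, then `y = v x + u` with `u`, `v` rational, so that
`f(X) + (v X + u) ^ 2`, where `f(X) = 2 X ^ 4 - 14 X ^ 3 + 21 X ^ 2 + 28 X + 7`, is divisible by the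
minimal polynomial of `x` and factors as `2 (X ^ 2 + b X + c) (X ^ 2 + d X + e)`. The resolvent
cubic of `f` then takes a square value at `2 (c + e)`: this is the image of the divisor of the
quadratic point in the Jacobian of the curve, the elliptic curve
`E : Y ^ 2 = X (X ^ 2 - 42 X - 7)` with `X = 2 (c + e) + 7`. A descent through the `2`-isogeny from
`E` to `Y ^ 2 = X (X ^ 2 + 84 X + 1792)` shows that `X = 0` for every affine rational point of `E`.
Thus `c + e = -7 / 2`, while `2 c e = 7 + u ^ 2`, which is impossible over the reals.
-/

section PowerFactorization

theorem isCoprime_of_mul_eq_squarefree_mul_pow {R : Type*} [CommRing R] [IsBezout R]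
    {q u v t : R} {k : ℕ} (hq : Squarefree q) (h : u * v = q * t ^ k)
    (hvut : IsCoprime (v - u) t) : IsCoprime u v := by
  rw [← isRelPrime_iff_isCoprime]
  intro d hdu hdv
  have hdt : IsCoprime (d * d) (t ^ k) := by
    have hd : IsCoprime d t := hvut.of_isCoprime_of_dvd_left (dvd_sub hdv hdu)
    exact (hd.mul_left hd).pow_right
  exact hq d (hdt.dvd_of_dvd_mul_right (h ▸ mul_dvd_mul hdu hdv))

theorem exists_eq_even_pow_of_isCoprime {u v t : ℤ} {k : ℕ} (hk : Even k) (hu : 0 ≤ u)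
    (huv : IsCoprime u v) (h : u * v = t ^ k) : ∃ m : ℤ, u = m ^ k := by
  obtain ⟨m, hm⟩ := exists_associated_pow_of_mul_eq_pow' huv h
  refine ⟨m, ?_⟩
  rcases Int.associated_iff.1 hm with h | h <;> linarith [hk.pow_nonneg m]

theorem exists_eq_even_pows_of_isCoprime {u v t : ℤ} {k : ℕ} (hk : Even k) (hk0 : k ≠ 0)
    (hu : 0 ≤ u) (hv : 0 ≤ v) (huv : IsCoprime u v) (h : u * v = t ^ k) :
    ∃ m n : ℤ, m * n = t ∧ u = m ^ k ∧ v = n ^ k := by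
  obtain ⟨m, rfl⟩ := exists_eq_even_pow_of_isCoprime hk hu huv h
  obtain ⟨n, rfl⟩ := exists_eq_even_pow_of_isCoprime hk hv huv.symm ((mul_comm _ _).trans h)
  rw [← mul_pow, pow_eq_pow_iff_of_ne_zero hk0] at h
  rcases h with h | ⟨h, -⟩
  · exact ⟨m, n, h, rfl, rfl⟩
  · exact ⟨-m, n, by rw [neg_mul, h, neg_neg], (hk.neg_pow m).symm, rfl⟩

theorem exists_eq_prime_mul_even_pow_of_isCoprime {p u v t : ℤ} {k : ℕ} (hp : Prime p)
    (hp0 : 0 < p) (hk : Even k) (hk0 : k ≠ 0) (hu : 0 ≤ u) (hv : 0 ≤ v) (huv : IsCoprime u v)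
    (h : u * v = p * t ^ k) :
    ∃ m n : ℤ, m * n = t ∧ IsCoprime m n ∧
      (u = p * m ^ k ∧ v = n ^ k ∨ v = p * m ^ k ∧ u = n ^ k) := by
  wlog hpu : p ∣ u generalizing u v
  · obtain ⟨m, n, hmn, hcop, huv⟩ := this hv hu huv.symm ((mul_comm _ _).trans h)
      ((hp.dvd_or_dvd ⟨_, h⟩).resolve_left hpu)
    exact ⟨m, n, hmn, hcop, huv.symm⟩
  obtain ⟨w, rfl⟩ := hpu
  have hwv : w * v = t ^ k := mul_left_cancel₀ hp.ne_zero (by rw [← mul_assoc, h])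
  obtain ⟨m, n, hmn, rfl, rfl⟩ := exists_eq_even_pows_of_isCoprime hk hk0
    (nonneg_of_mul_nonneg_right hu hp0) hv huv.of_mul_left_right hwv
  have hk_pos := Nat.pos_of_ne_zero hk0
  exact ⟨m, n, hmn, (IsCoprime.pow_iff hk_pos hk_pos).1 huv.of_mul_left_right, .inl ⟨rfl, rfl⟩⟩

theorem exists_eq_add_of_sq_eq_sq_add {p x y t : ℤ} {k : ℕ} (hp : Prime p) (hp0 : 0 < p)
    (hk : Even k) (hk0 : k ≠ 0) (hyt : IsCoprime y t) (h : x ^ 2 = y ^ 2 + 4 * p * t ^ k) :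
    ∃ m n : ℤ, m * n = t ∧ IsCoprime m n ∧ |x| = n ^ k + p * m ^ k ∧
      (y = n ^ k - p * m ^ k ∨ y = p * m ^ k - n ^ k) := by
  wlog hx : 0 ≤ x generalizing x
  · simpa using this (x := -x) (by rwa [neg_sq]) (by linarith)
  rw [abs_of_nonneg hx]
  obtain ⟨u, hu⟩ : Even (x - y) := by
    have : Even (x ^ 2 - y ^ 2) := ⟨2 * p * t ^ k, by rw [h]; ring⟩
    simpa [Int.even_sub, Int.even_pow] using this
  obtain ⟨v, hv⟩ : Even (x + y) := ⟨u + y, by linarith⟩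
  have hyx : |y| ≤ x := abs_le_of_sq_le_sq (by nlinarith [hk.pow_nonneg t]) hx
  have huv : u * v = p * t ^ k := by
    have : (x - y) * (x + y) = 4 * (p * t ^ k) := by linear_combination h
    rw [hu, hv] at this
    linarith
  have hcop : IsCoprime u v := by
    refine isCoprime_of_mul_eq_squarefree_mul_pow hp.squarefree huv ?_
    rwa [show v - u = y by linarith]
  obtain ⟨m, n, hmn, hcop', huv | huv⟩ := exists_eq_prime_mul_even_pow_of_isCoprime hp hp0 hk hk0
    (by linarith [le_abs_self y]) (by linarith [neg_abs_le y]) hcop huv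
  · exact ⟨m, n, hmn, hcop', by linarith, .inl (by linarith)⟩
  · exact ⟨m, n, hmn, hcop', by linarith, .inr (by linarith)⟩

end PowerFactorization

section TwoDescent

/-- The binary quartic form `d a⁴ + A a² b² + e b⁴`. Its square values are the points on the
homogeneous space attached to the factorization `B = d e` in the descent through the `2`-isogeny on
`Y ^ 2 = X (X ^ 2 + A X + B)`, a solution `(a, b)` lying over `X = d a² / b²`. -/
def descentQuartic (A d e a b : ℤ) : ℤ :=
  d * a ^ 4 + A * a ^ 2 * b ^ 2 + e * b ^ 4

theorem descentQuartic_swap (A d e a b : ℤ) :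
    descentQuartic A d e a b = descentQuartic A e d b a := by
  simp only [descentQuartic]
  ring

theorem exists_squarefree_mul_sq (p : ℤ) : ∃ d a : ℤ, Squarefree d ∧ p = d * a ^ 2 := by
  obtain ⟨d, a, had, hd⟩ := Nat.sq_mul_squarefree p.natAbs
  have had' : (d : ℤ) * a ^ 2 = p.natAbs := by rw [← had]; push_cast; ring
  have hd' : Squarefree (d : ℤ) := Int.squarefree_natCast.2 hd
  rcases p.natAbs_eq with hp | hp
  · exact ⟨d, a, hd', by rw [had', ← hp]⟩
  · exact ⟨-d, a, Int.squarefree_natAbs.1 (by simpa using hd), by rw [neg_mul, had', ← hp]⟩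

theorem exists_eq_squarefree_mul_sq_of_mul_eq_sq {d a C w : ℤ} (hd : Squarefree d) (ha : a ≠ 0)
    (h : d * a ^ 2 * C = w ^ 2) : ∃ c : ℤ, C = d * c ^ 2 := by
  obtain ⟨w, rfl⟩ : a ∣ w := (Int.pow_dvd_pow_iff two_ne_zero).1 ⟨d * C, by rw [← h]; ring⟩
  have hw : d * C = w ^ 2 := mul_left_cancel₀ (pow_ne_zero 2 ha) (by linear_combination h)
  obtain ⟨c, rfl⟩ : d ∣ w := (hd.dvd_pow_iff_dvd two_ne_zero).1 ⟨C, hw.symm⟩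
  exact ⟨c, mul_left_cancel₀ hd.ne_zero (by linear_combination hw)⟩

theorem exists_eq_div_sq_of_rational_point {A B : ℤ} {x y : ℚ}
    (h : y ^ 2 = x * (x ^ 2 + A * x + B)) :
    ∃ p b w : ℤ, b ≠ 0 ∧ IsCoprime p b ∧ x = p / b ^ 2 ∧
      p * (p ^ 2 + A * p * b ^ 2 + B * b ^ 4) = w ^ 2 := by
  obtain ⟨p, q, hq, hpq, rfl⟩ : ∃ p q : ℤ, 0 < q ∧ IsCoprime p q ∧ x = p / q :=
    ⟨x.num, x.den, mod_cast x.den_pos, Int.isCoprime_iff_gcd_eq_one.2 x.reduced,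
      (Rat.num_div_den x).symm⟩
  have hq0 : (q : ℚ) ≠ 0 := by exact_mod_cast hq.ne'
  obtain ⟨z, hz⟩ : IsSquare (q * (p * (p ^ 2 + A * p * q + B * q ^ 2))) := by
    rw [← Rat.isSquare_intCast_iff]
    refine ⟨y * q ^ 2, ?_⟩
    field_simp at h
    push_cast
    linear_combination -q * h
  rw [← sq] at hz
  have hcop : IsCoprime q (p * (p ^ 2 + A * p * q + B * q ^ 2)) := by
    refine hpq.symm.mul_right ?_
    rw [show p ^ 2 + A * p * q + B * q ^ 2 = p ^ 2 + q * (A * p + B * q) by ring]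
    exact hpq.symm.pow_right.add_mul_left_right _
  obtain ⟨b, rfl⟩ : ∃ b : ℤ, q = b ^ 2 := exists_eq_even_pow_of_isCoprime even_two hq.le hcop hz
  have hb : b ≠ 0 := by rintro rfl; simp at hq
  obtain ⟨w, rfl⟩ : b ∣ z := (Int.pow_dvd_pow_iff two_ne_zero).1 ⟨_, hz.symm⟩
  exact ⟨p, b, w, hb, (IsCoprime.pow_right_iff two_pos).1 hpq, by push_cast; rfl,
    mul_left_cancel₀ (pow_ne_zero 2 hb) (by linear_combination hz)⟩

theorem exists_descentQuartic_eq_sq_of_rational_point {A B : ℤ} {x y : ℚ} (hx : x ≠ 0)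
    (h : y ^ 2 = x * (x ^ 2 + A * x + B)) :
    ∃ d e a b c : ℤ, d * e = B ∧ a ≠ 0 ∧ b ≠ 0 ∧ IsCoprime a b ∧
      descentQuartic A d e a b = c ^ 2 := by
  obtain ⟨p, b, w, hb, hpb, rfl, hw⟩ := exists_eq_div_sq_of_rational_point h
  obtain ⟨d, a, hd, rfl⟩ := exists_squarefree_mul_sq p
  have ha : a ≠ 0 := by rintro rfl; simp at hx
  obtain ⟨c, hc⟩ := exists_eq_squarefree_mul_sq_of_mul_eq_sq hd ha hw
  have hdb : IsCoprime d (b ^ 4) := hpb.of_mul_left_left.pow_right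
  obtain ⟨e, rfl⟩ : d ∣ B := hdb.dvd_of_dvd_mul_right
    ⟨c ^ 2 - d * a ^ 4 - A * a ^ 2 * b ^ 2, by linear_combination hc⟩
  refine ⟨d, e, a, b, c, rfl, ha, hb,
    (IsCoprime.pow_left_iff two_pos).1 hpb.of_mul_left_right, mul_left_cancel₀ hd.ne_zero ?_⟩
  rw [descentQuartic]
  linear_combination hc

end TwoDescent

section EllipticCurve

theorem descentQuartic_seven_neg_one_ne_sq {a b c : ℤ} (hab : IsCoprime a b) :
    descentQuartic (-42) 7 (-1) a b ≠ c ^ 2 := by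
  rw [descentQuartic]
  intro h
  have hmod : ∀ x y : ZMod 7, x ^ 2 + y ^ 4 = 0 → x = 0 ∧ y = 0 := by decide
  have hcb : ((c ^ 2 + b ^ 4 : ℤ) : ZMod 7) = 0 :=
    (ZMod.intCast_zmod_eq_zero_iff_dvd _ 7).2
      ⟨a ^ 4 - 6 * a ^ 2 * b ^ 2, by push_cast; linear_combination -h⟩
  obtain ⟨hc, hb⟩ := hmod c b (by exact_mod_cast hcb)
  obtain ⟨c, rfl⟩ := (ZMod.intCast_zmod_eq_zero_iff_dvd c 7).1 hc
  obtain ⟨b, rfl⟩ := (ZMod.intCast_zmod_eq_zero_iff_dvd b 7).1 hb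
  push_cast at h hab
  have ha : (7 : ℤ) ∣ a ^ 4 := ⟨c ^ 2 + 42 * a ^ 2 * b ^ 2 + 49 * b ^ 4, by linarith⟩
  have h7 : Prime (7 : ℤ) := by norm_num
  exact h7.not_isUnit (hab.isUnit_of_dvd' (h7.dvd_of_dvd_pow ha) (dvd_mul_right 7 b))

theorem descentQuartic_one_neg_seven_ne_sq_of_odd {a b c : ℤ} (ha : Odd a) (hb : Odd b) :
    descentQuartic (-42) 1 (-7) a b ≠ c ^ 2 := by
  rw [descentQuartic]
  intro h
  obtain ⟨i, hi⟩ := Int.eight_dvd_sq_sub_one_of_odd ha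
  obtain ⟨j, hj⟩ := Int.eight_dvd_sq_sub_one_of_odd hb
  obtain ⟨l, hl⟩ : ∃ l, a ^ 2 - 21 * b ^ 2 = 4 * (2 * l + 1) :=
    ⟨i - 21 * j - 3, by linear_combination hi - 21 * hj⟩
  have hc : c ^ 2 = 4 ^ 2 * ((2 * l + 1) ^ 2 - 28 * (8 * j + 1) ^ 2) := by
    rw [← hj]
    linear_combination (a ^ 2 - 21 * b ^ 2 + 4 * (2 * l + 1)) * hl - h
  obtain ⟨d, rfl⟩ : (4 : ℤ) ∣ c := (Int.pow_dvd_pow_iff two_ne_zero).1 ⟨_, hc⟩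
  have hd : d ^ 2 = (2 * l + 1) ^ 2 - 28 * (8 * j + 1) ^ 2 := by linarith
  have hmod : ∀ d l j : ZMod 8, d ^ 2 ≠ (2 * l + 1) ^ 2 - 28 * (8 * j + 1) ^ 2 := by decide
  exact hmod d l j (by exact_mod_cast congrArg (Int.cast : ℤ → ZMod 8) hd)

theorem odd_of_descentQuartic_one_neg_seven_eq_sq {a b c : ℤ} (hab : IsCoprime a b)
    (h : descentQuartic (-42) 1 (-7) a b = c ^ 2) : Odd c := by
  by_contra hc
  have hparity : Even a ↔ Even b := by
    have hc2 : Even (c ^ 2) := (Int.not_odd_iff_even.1 hc).pow_of_ne_zero two_ne_zero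
    rw [← h, descentQuartic] at hc2
    have h42 : Even (42 : ℤ) := by decide
    have h7 : ¬ Even (7 : ℤ) := by decide
    simpa [Int.even_add, Int.even_mul, Int.even_pow, h42, h7] using hc2
  rcases Int.even_or_odd a with ha | ha
  · exact Int.prime_two.not_isUnit (hab.isUnit_of_dvd' ha.two_dvd (hparity.1 ha).two_dvd)
  · refine descentQuartic_one_neg_seven_ne_sq_of_odd ha ?_ h
    rwa [← Int.not_even_iff_odd, ← hparity, Int.not_even_iff_odd]

theorem exists_dual_descentQuartic_eq_sq {a b c : ℤ} (hab : IsCoprime a b)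
    (h : descentQuartic (-42) 1 (-7) a b = c ^ 2) :
    ∃ m n : ℤ, m * n = 2 * b ∧ IsCoprime m n ∧
      descentQuartic 84 1 1792 (4 * n) m = (16 * a) ^ 2 := by
  have hc : Odd c := odd_of_descentQuartic_one_neg_seven_eq_sq hab h
  rw [descentQuartic] at h
  have hcb : IsCoprime c b := by
    rw [← IsCoprime.pow_left_iff two_pos, ← h, show 1 * a ^ 4 + -42 * a ^ 2 * b ^ 2 + -7 * b ^ 4 =
      a ^ 4 + b * (-42 * a ^ 2 * b - 7 * b ^ 3) by ring]
    exact hab.pow_left.add_mul_left_left _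
  have hpos : 0 ≤ a ^ 2 - 21 * b ^ 2 := by
    by_contra! hneg
    nlinarith [sq_nonneg a, sq_nonneg b, sq_nonneg c, mul_nonneg (sq_nonneg a) (sq_nonneg b)]
  have hsq : (a ^ 2 - 21 * b ^ 2) ^ 2 = c ^ 2 + 4 * 7 * (2 * b) ^ 4 := by linear_combination h
  obtain ⟨m, n, hmn, hcop, hk, -⟩ := exists_eq_add_of_sq_eq_sq_add (by norm_num) (by norm_num)
    (by decide) four_ne_zero ((Int.isCoprime_two_right.2 hc).mul_right hcb) hsq
  rw [abs_of_nonneg hpos] at hk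
  refine ⟨m, n, hmn, hcop, ?_⟩
  rw [descentQuartic]
  linear_combination -256 * hk + 1344 * (m * n + 2 * b) * hmn

theorem exists_descentQuartic_eq_sq_of_dual {w t z : ℤ} (hwt : IsCoprime w t)
    (h : descentQuartic 84 1 1792 w t = z ^ 2) :
    ∃ m n : ℤ, m * n = t ∧ IsCoprime m n ∧ descentQuartic (-42) 1 (-7) n m = w ^ 2 := by
  have hcop : IsCoprime (w ^ 2 + 42 * t ^ 2) t := by
    rw [show w ^ 2 + 42 * t ^ 2 = w ^ 2 + t * (42 * t) by ring]
    exact hwt.pow_left.add_mul_left_left _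
  have hsq : z ^ 2 = (w ^ 2 + 42 * t ^ 2) ^ 2 + 4 * 7 * t ^ 4 := by
    rw [← h, descentQuartic]
    ring
  obtain ⟨m, n, rfl, hmn, -, hw | hw⟩ := exists_eq_add_of_sq_eq_sq_add (by norm_num)
    (by norm_num) (by decide) four_ne_zero hcop hsq
  · exact ⟨m, n, rfl, hmn, by rw [descentQuartic]; linear_combination -hw⟩
  · refine (descentQuartic_seven_neg_one_ne_sq (c := w) hmn ?_).elim
    rw [descentQuartic]
    linear_combination -hw

theorem dual_descentQuartic_ne_sq_of_odd {w t z : ℤ} (hwt : IsCoprime w t) (ht : Odd t) :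
    descentQuartic 84 1 1792 w t ≠ z ^ 2 := by
  intro h
  obtain ⟨m, n, rfl, -, hmn⟩ := exists_descentQuartic_eq_sq_of_dual hwt h
  obtain ⟨hm, hn⟩ := Int.odd_mul.1 ht
  exact descentQuartic_one_neg_seven_ne_sq_of_odd hn hm hmn

theorem exists_four_mul_eq_of_dual_descentQuartic_eq_sq {m n z : ℤ} (hmn : IsCoprime m n)
    (h : descentQuartic 84 1 1792 (4 * n) m = (16 * z) ^ 2) :
    ∃ t : ℤ, m = 4 * t ∧ descentQuartic 84 1 1792 n t = z ^ 2 := by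
  have hm : Even m := by
    by_contra! hm
    rw [Int.not_even_iff_odd] at hm
    have h4 : IsCoprime (2 ^ 2 : ℤ) m := (Int.isCoprime_two_left.2 hm).pow_left
    exact dual_descentQuartic_ne_sq_of_odd (h4.mul_left hmn.symm) hm h
  obtain ⟨r, rfl⟩ := hm.two_dvd
  have hr : Even r := by
    by_contra! hr
    rw [Int.not_even_iff_odd] at hr
    have hcop : IsCoprime (2 * n) r :=
      (Int.isCoprime_two_left.2 hr).mul_left hmn.of_mul_left_right.symm
    refine dual_descentQuartic_ne_sq_of_odd (z := 4 * z) hcop hr ?_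
    simp only [descentQuartic] at h ⊢
    linarith
  obtain ⟨t, rfl⟩ := hr.two_dvd
  refine ⟨t, by ring, ?_⟩
  simp only [descentQuartic] at h ⊢
  linarith

theorem exists_natAbs_lt_descentQuartic_one_neg_seven_eq_sq {a b c : ℤ} (hb : b ≠ 0)
    (hab : IsCoprime a b) (h : descentQuartic (-42) 1 (-7) a b = c ^ 2) :
    ∃ a' b' c' : ℤ, b'.natAbs < b.natAbs ∧ b' ≠ 0 ∧ IsCoprime a' b' ∧
      descentQuartic (-42) 1 (-7) a' b' = c' ^ 2 := by
  obtain ⟨m, n, hmn, hcop, hdual⟩ := exists_dual_descentQuartic_eq_sq hab h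
  obtain ⟨t, rfl, ht⟩ := exists_four_mul_eq_of_dual_descentQuartic_eq_sq hcop hdual
  obtain ⟨b', a', rfl, hcop', h'⟩ :=
    exists_descentQuartic_eq_sq_of_dual hcop.of_mul_left_right.symm ht
  obtain rfl : b = b' * (2 * (a' * n)) := by linarith
  obtain ⟨hb', hr⟩ := mul_ne_zero_iff.1 hb
  refine ⟨a', b', n, ?_, hb', hcop'.symm, h'⟩
  rw [Int.natAbs_mul]
  exact lt_mul_of_one_lt_right (Int.natAbs_pos.2 hb') (by omega)

theorem descentQuartic_one_neg_seven_ne_sq {a b c : ℤ} (hb : b ≠ 0) (hab : IsCoprime a b) :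
    descentQuartic (-42) 1 (-7) a b ≠ c ^ 2 := by
  intro h
  induction hN : b.natAbs using Nat.strong_induction_on generalizing a b c with
  | _ N ih =>
    obtain ⟨a', b', c', hlt, hb', hab', h'⟩ :=
      exists_natAbs_lt_descentQuartic_one_neg_seven_eq_sq hb hab h
    exact ih _ (hN ▸ hlt) hb' hab' h' rfl

theorem eq_zero_of_sq_eq_mul_sq_sub_sub {x y : ℚ} (h : y ^ 2 = x * (x ^ 2 - 42 * x - 7)) :
    x = 0 := by
  by_contra hx
  obtain ⟨d, e, a, b, c, hde, ha, hb, hab, hc⟩ := exists_descentQuartic_eq_sq_of_rational_point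
    (A := -42) (B := -7) (y := y) hx (by push_cast; linear_combination h)
  have hd : d.natAbs ∣ 7 := Int.natAbs_dvd_natAbs.2 (⟨-e, by linarith⟩ : d ∣ 7)
  rcases (Nat.dvd_prime (by norm_num)).1 hd with hd | hd <;>
    rcases Int.natAbs_eq_iff.1 hd with rfl | rfl
  · obtain rfl : e = -7 := by push_cast at hde; linarith
    exact descentQuartic_one_neg_seven_ne_sq hb hab hc
  · obtain rfl : e = 7 := by push_cast at hde; linarith
    exact descentQuartic_seven_neg_one_ne_sq hab.symm (descentQuartic_swap .. ▸ hc)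
  · obtain rfl : e = -1 := by push_cast at hde; linarith
    exact descentQuartic_seven_neg_one_ne_sq hab hc
  · obtain rfl : e = 1 := by push_cast at hde; linarith
    exact descentQuartic_one_neg_seven_ne_sq ha hab.symm (descentQuartic_swap .. ▸ hc)

end EllipticCurve

section ResolventCubic

/-- The resolvent cubic of the quartic `f₄ X⁴ + f₃ X³ + f₂ X² + f₁ X + f₀`, evaluated at `z`. It is
normalized to be monic; for roots `xᵢ` of the quartic, its roots are `f₄ (x₁ x₂ + x₃ x₄)` and the
two other values of this form. -/
def resolventCubic {R : Type*} [CommRing R] (f₄ f₃ f₂ f₁ f₀ z : R) : R :=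
  z ^ 3 - f₂ * z ^ 2 + (f₃ * f₁ - 4 * f₄ * f₀) * z - (f₃ ^ 2 * f₀ - 4 * f₄ * f₂ * f₀ + f₄ * f₁ ^ 2)

/-- The hypotheses say that `f(X) + (v X + u)² = f₄ (X² + b X + c) (X² + d X + e)`. -/
theorem resolventCubic_eq_sq_of_factorization {R : Type*} [CommRing R]
    {f₄ f₃ f₂ f₁ f₀ b c d e u v : R} (h₃ : f₃ = f₄ * (b + d))
    (h₂ : f₂ + v ^ 2 = f₄ * (c + e + b * d)) (h₁ : f₁ + 2 * u * v = f₄ * (b * e + c * d))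
    (h₀ : f₀ + u ^ 2 = f₄ * (c * e)) :
    resolventCubic f₄ f₃ f₂ f₁ f₀ (f₄ * (c + e)) =
      (f₄ * ((b - d) * u - (c - e) * v)) ^ 2 := by
  rw [resolventCubic, h₃, eq_sub_of_add_eq h₂, eq_sub_of_add_eq h₁, eq_sub_of_add_eq h₀]
  ring

end ResolventCubic

section QuadraticExtension

variable {F K : Type*} [Field F] [CommRing K] [Nontrivial K] [Algebra F K] {x y : K}

theorem linearIndependent_one_of_notMem_range (hx : x ∉ Set.range (algebraMap F K)) :
    LinearIndependent F ![1, x] :=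
  (LinearIndependent.pair_iff' one_ne_zero).2 fun a ha ↦
    hx ⟨a, by rw [← ha, Algebra.algebraMap_eq_smul_one]⟩

theorem eq_zero_of_add_mul_eq_zero (hx : x ∉ Set.range (algebraMap F K)) {s t : F}
    (h : algebraMap F K s + algebraMap F K t * x = 0) : s = 0 ∧ t = 0 := by
  rw [Algebra.algebraMap_eq_smul_one s, ← Algebra.smul_def] at h
  have hli := linearIndependent_one_of_notMem_range hx
  rw [LinearIndependent.pair_iff] at hli
  exact hli s t h

theorem exists_eq_add_mul (hK : Module.finrank F K = 2) (hx : x ∉ Set.range (algebraMap F K))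
    (w : K) : ∃ s t : F, w = algebraMap F K s + algebraMap F K t * x := by
  have : FiniteDimensional F K := Module.finite_of_finrank_pos (by omega)
  have hspan := (linearIndependent_one_of_notMem_range hx).span_eq_top_of_card_eq_finrank'
    (by simp [hK])
  have hw : w ∈ Submodule.span F (Set.range ![1, x]) := hspan ▸ Submodule.mem_top
  rw [Matrix.range_cons_cons_empty, Submodule.mem_span_pair] at hw
  obtain ⟨s, t, rfl⟩ := hw
  exact ⟨s, t, by rw [← Algebra.algebraMap_eq_smul_one, Algebra.smul_def]⟩

theorem exists_factorization_of_quadratic_point (hK : Module.finrank F K = 2)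
    (hx : x ∉ Set.range (algebraMap F K)) {f₄ f₃ f₂ f₁ f₀ : F} (hf₄ : f₄ ≠ 0)
    (h : y ^ 2 = -(algebraMap F K f₄ * x ^ 4 + algebraMap F K f₃ * x ^ 3 +
      algebraMap F K f₂ * x ^ 2 + algebraMap F K f₁ * x + algebraMap F K f₀)) :
    ∃ b c d e u v : F, f₃ = f₄ * (b + d) ∧ f₂ + v ^ 2 = f₄ * (c + e + b * d) ∧
      f₁ + 2 * u * v = f₄ * (b * e + c * d) ∧ f₀ + u ^ 2 = f₄ * (c * e) := by
  obtain ⟨c, b, hxx⟩ := exists_eq_add_mul hK hx (-x ^ 2)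
  obtain ⟨u, v, rfl⟩ := exists_eq_add_mul hK hx y
  obtain ⟨d, h₃⟩ : ∃ d, f₃ = f₄ * (b + d) := ⟨f₃ / f₄ - b, by field_simp; ring⟩
  obtain ⟨e, h₂⟩ : ∃ e, f₂ + v ^ 2 = f₄ * (c + e + b * d) :=
    ⟨(f₂ + v ^ 2) / f₄ - c - b * d, by field_simp; ring⟩
  have h₃' := congrArg (algebraMap F K) h₃
  have h₂' := congrArg (algebraMap F K) h₂
  -- Dividing `f(X) + (v X + u)²` by `X² + b X + c` leaves a linear remainder vanishing at `x`.
  obtain ⟨h₀, h₁⟩ := eq_zero_of_add_mul_eq_zero hx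
    (s := f₀ + u ^ 2 - f₄ * (c * e)) (t := f₁ + 2 * u * v - f₄ * (b * e + c * d)) (by
      simp only [map_add, map_sub, map_mul, map_pow, map_ofNat] at h₃' h₂' ⊢
      linear_combination h - x ^ 3 * h₃' - x ^ 2 * h₂' +
        algebraMap F K f₄ * (x ^ 2 + algebraMap F K d * x + algebraMap F K e) * hxx)
  exact ⟨b, c, d, e, u, v, h₃, h₂, sub_eq_zero.1 h₁, sub_eq_zero.1 h₀⟩

end QuadraticExtension

/-- **Main theorem for p = 7.** Let `K` be a quadratic field (a field with a
`ℚ`-algebra structure which is 2-dimensional over `ℚ`). If `x, y ∈ K` satisfy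
`y² = -(2x⁴ - 14x³ + 21x² + 28x + 7)` (an affine model of the non-split Cartan
modular curve `X_ns(7)`), then `x` is rational, i.e. lies in the image of
`ℚ → K`. Hence `X_ns(7)` has no exceptional quadratic points. -/
theorem no_exceptional_quadratic_points_Xns7
    (K : Type*) [Field K] [Algebra ℚ K] (hK : Module.finrank ℚ K = 2)
    (x y : K) (h : y ^ 2 = -(2 * x ^ 4 - 14 * x ^ 3 + 21 * x ^ 2 + 28 * x + 7)) :
    x ∈ Set.range (algebraMap ℚ K) := by
  by_contra hx
  obtain ⟨b, c, d, e, u, v, h₃, h₂, h₁, h₀⟩ := exists_factorization_of_quadratic_point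
    (f₄ := 2) (f₃ := -14) (f₂ := 21) (f₁ := 28) (f₀ := 7) (y := y) hK hx two_ne_zero
    (by simp only [map_neg, map_ofNat]; linear_combination h)
  have hsq := resolventCubic_eq_sq_of_factorization h₃ h₂ h₁ h₀
  have hz : 2 * (c + e) + 7 = 0 := by
    refine eq_zero_of_sq_eq_mul_sq_sub_sub (y := 2 * ((b - d) * u - (c - e) * v)) ?_
    rw [← hsq, resolventCubic]
    ring
  have hdisc : 4 * (c - e) ^ 2 = -7 - 8 * u ^ 2 := by
    linear_combination (2 * (c + e) - 7) * hz + 8 * h₀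
  linarith [sq_nonneg (c - e), sq_nonneg u]
end

section
/- Let K be a quadratic field. If x, y ∈ K satisfy y^2 = -81x^4 + 189x^2 - 112, then x is rational. -/
/-!
Suppose `x` is irrational, with minimal polynomial `X² - sX - t`, and write `y = px + q`. Then
`X² - sX - t` divides `-81X⁴ + 189X² - 112 - (pX + q)²`, and the coefficients of the remainder give
a rational point with abscissa `m = (p² + 81s²) / 9` on the Jacobian `E : Y² = X(X² - 42X - 7)` of
the curve. The only affine rational point of `E` is `(0, 0)`, so `p = s = 0`, whence
`q² = -81t² + 189t - 112`, which is negative.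

A positive rational abscissa on `E` is a square by a descent along the 2-isogeny `E' → E`, where
`E' : Y² = X(X² + 21X + 112)`; so it remains to show that `z⁴ - 42z² - 7` is never a square.
If it is, a descent along `E → E'` and one along `E' → E` again halve the point `(z², ·)` up to
torsion: there is `e` with `e⁴ - 42e² - 7` a square `c²` and `z = (e⁴ + 7) / (2ec)`. Since
`e⁴ + 7` cancels against `2ec` only up to a divisor of `8`, the numerator of `z` exceeds that of
`e` in absolute value, and infinite descent applies.
-/

section QuarticOverQuadraticAlgebra

variable {F K : Type*} [Field F]

theorem linearIndependent_one_of_notMem_range_algebraMap [Ring K] [Nontrivial K] [Algebra F K]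
    {x : K} (hx : x ∉ Set.range (algebraMap F K)) : LinearIndependent F ![1, x] := by
  rw [LinearIndependent.pair_iff' one_ne_zero]
  intro a ha
  exact hx ⟨a, by rw [← ha, Algebra.algebraMap_eq_smul_one]⟩

theorem exists_smul_one_add_smul_eq_of_finrank_eq_two [Ring K] [Algebra F K]
    (hK : Module.finrank F K = 2) {x : K} (hx : LinearIndependent F ![1, x]) (k : K) :
    ∃ a b : F, a • (1 : K) + b • x = k := by
  have hspan := hx.span_eq_top_of_card_eq_finrank (by simp [hK])
  rw [← Submodule.mem_span_pair, ← Matrix.range_cons_cons_empty, hspan]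
  exact Submodule.mem_top

/- The equations say that `X² - sX - t` divides `AX⁴ + BX² + C - (pX + q)²`. -/
theorem exists_coeffs_of_sq_eq_quartic [CommRing K] [Algebra F K]
    (hK : Module.finrank F K = 2) {A B C : F} {x y : K} (hx : x ∉ Set.range (algebraMap F K))
    (h : y ^ 2 = algebraMap F K A * x ^ 4 + algebraMap F K B * x ^ 2 + algebraMap F K C) :
    ∃ p q s t : F, p ^ 2 * s + 2 * p * q = A * (s ^ 3 + 2 * s * t) + B * s ∧
      p ^ 2 * t + q ^ 2 = A * (s ^ 2 * t + t ^ 2) + B * t + C := by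
  have : Nontrivial K := Module.nontrivial_of_finrank_pos (R := F) (by omega)
  have hind := linearIndependent_one_of_notMem_range_algebraMap hx
  obtain ⟨q, p, hy⟩ := exists_smul_one_add_smul_eq_of_finrank_eq_two hK hind y
  obtain ⟨t, s, hx2⟩ := exists_smul_one_add_smul_eq_of_finrank_eq_two hK hind (x ^ 2)
  refine ⟨p, q, s, t, (hind.eq_of_pair ?_).symm⟩
  simp only [Algebra.smul_def, mul_one, map_add, map_mul, map_pow, map_ofNat] at hy hx2 ⊢
  rw [← hy] at h
  generalize algebraMap F K A = A, algebraMap F K B = B, algebraMap F K p = p,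
    algebraMap F K s = s, algebraMap F K t = t at *
  linear_combination h + (p ^ 2 - A * (x ^ 2 + s * x + t + s ^ 2) - B) * hx2

/- The conclusion is the equation of the Jacobian of `y² = Ax⁴ + Bx² + C`. -/
theorem mul_quadratic_eq_sq_of_coeffs {R : Type*} [CommRing R] {A B C p q s t : R}
    (h₁ : p ^ 2 * s + 2 * p * q = A * (s ^ 3 + 2 * s * t) + B * s)
    (h₂ : p ^ 2 * t + q ^ 2 = A * (s ^ 2 * t + t ^ 2) + B * t + C) :
    (p ^ 2 - A * s ^ 2) *
        ((p ^ 2 - A * s ^ 2) ^ 2 - 2 * B * (p ^ 2 - A * s ^ 2) + (B ^ 2 - 4 * A * C)) =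
      (2 * A * q * s - p * (2 * A * t + B - (p ^ 2 - A * s ^ 2))) ^ 2 := by
  linear_combination
    (-A) * (p ^ 2 * s + 2 * p * q - A * (s ^ 3 + 2 * s * t) - B * s) * h₁
      + 4 * A * (p ^ 2 - A * s ^ 2) * h₂

end QuarticOverQuadraticAlgebra

section TwoDescent

theorem exists_intCast_eq_of_sq_eq_intCast {x : ℚ} {N : ℤ} (h : x ^ 2 = N) : ∃ n : ℤ, n = x :=
  IsIntegrallyClosed.exists_algebraMap_eq_of_isIntegral_pow two_pos
    (h ▸ isIntegral_algebraMap (x := N))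

theorem exists_squarefree_mul_sq_eq (a : ℤ) : ∃ D e : ℤ, Squarefree D ∧ D * e ^ 2 = a := by
  obtain ⟨d, e, hde, hd⟩ := Nat.sq_mul_squarefree a.natAbs
  have hd' : Squarefree (d : ℤ) := Int.squarefree_natCast.2 hd
  have habs : (a.natAbs : ℤ) = d * e ^ 2 := by rw [← hde]; push_cast; ring
  rcases Int.natAbs_eq a with ha | ha
  · exact ⟨d, e, hd', by rw [ha, habs]⟩
  · exact ⟨-d, e, by
      rwa [← Int.squarefree_natAbs, Int.natAbs_neg, Int.natAbs_natCast], by rw [ha, habs, neg_mul]⟩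

theorem exists_eq_mul_sq_of_squarefree {D e g N : ℤ} (hD : Squarefree D) (he : e ≠ 0)
    (h : D * e ^ 2 * g = N ^ 2) : ∃ w, g = D * w ^ 2 := by
  obtain ⟨M, rfl⟩ : e ∣ N := (Int.pow_dvd_pow_iff two_ne_zero).1 ⟨D * g, by rw [← h]; ring⟩
  have hM : D * g = M ^ 2 := mul_left_cancel₀ (pow_ne_zero 2 he) (by linear_combination h)
  obtain ⟨w, rfl⟩ : D ∣ M := (hD.dvd_pow_iff_dvd two_ne_zero).1 ⟨g, hM.symm⟩
  exact ⟨w, mul_left_cancel₀ hD.ne_zero (by linear_combination hM)⟩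

theorem exists_den_eq_sq_and_num_mul_eq_sq {P Q : ℤ} {m Y : ℚ}
    (h : m * (m ^ 2 + P * m + Q) = Y ^ 2) :
    ∃ v N : ℤ, (m.den : ℤ) = v ^ 2 ∧
      m.num * (m.num ^ 2 + P * m.num * m.den + Q * m.den ^ 2) = N ^ 2 := by
  have hb : (0 : ℤ) < m.den := mod_cast m.den_pos
  have hab : IsCoprime m.num m.den := Rat.isCoprime_num_den m
  have hm : (m.num : ℚ) = m * m.den := (Rat.mul_den_eq_num m).symm
  have hsq : (Y * m.den ^ 2) ^ 2 = ((m.den * (m.num *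
      (m.num ^ 2 + P * m.num * m.den + Q * m.den ^ 2)) : ℤ) : ℚ) := by
    push_cast
    rw [hm]
    linear_combination -(m.den : ℚ) ^ 4 * h
  obtain ⟨M, hM⟩ := exists_intCast_eq_of_sq_eq_intCast hsq
  rw [← hM] at hsq
  have hM2 : m.den * (m.num * (m.num ^ 2 + P * m.num * m.den + Q * m.den ^ 2)) = M ^ 2 :=
    mod_cast hsq.symm
  generalize m.num = a, (m.den : ℤ) = b at *
  have hcop : IsCoprime b (a * (a ^ 2 + P * a * b + Q * b ^ 2)) := by
    refine hab.symm.mul_right ?_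
    rw [show a ^ 2 + P * a * b + Q * b ^ 2 = a ^ 2 + b * (P * a + Q * b) by ring]
    exact (hab.symm.pow_right (n := 2)).add_mul_left_right _
  obtain ⟨v, rfl | rfl⟩ := Int.sq_of_isCoprime hcop hM2
  · obtain ⟨N, rfl⟩ : v ∣ M := (Int.pow_dvd_pow_iff two_ne_zero).1 ⟨_, hM2.symm⟩
    exact ⟨v, N, rfl, mul_left_cancel₀ hb.ne' (by rw [hM2]; ring)⟩
  · exact absurd hb (by have := sq_nonneg v; omega)

/- `w² = Du⁴ + Pu²v² + D'v⁴` is the homogeneous space attached to the square class `D`. -/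
theorem exists_homogeneousSpace_point {P Q : ℤ} {m Y : ℚ} (hm : m ≠ 0)
    (h : m * (m ^ 2 + P * m + Q) = Y ^ 2) :
    ∃ D D' u v w : ℤ, Squarefree D ∧ D * D' = Q ∧ IsCoprime D v ∧ m = D * (u / v : ℚ) ^ 2 ∧
      w ^ 2 = D * u ^ 4 + P * u ^ 2 * v ^ 2 + D' * v ^ 4 := by
  obtain ⟨v, N, hv, hN⟩ := exists_den_eq_sq_and_num_mul_eq_sq h
  obtain ⟨D, u, hD, hu⟩ := exists_squarefree_mul_sq_eq m.num
  have hu0 : u ≠ 0 := by rintro rfl; simp [eq_comm, hm] at hu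
  have hcop : IsCoprime D v :=
    ((Rat.isCoprime_num_den m).of_isCoprime_of_dvd_left ⟨_, hu.symm⟩).of_isCoprime_of_dvd_right
      ⟨v, by rw [hv, sq]⟩
  rw [hv] at hN
  nth_rw 1 [← hu] at hN
  obtain ⟨w, hw⟩ := exists_eq_mul_sq_of_squarefree hD hu0 hN
  rw [← hu] at hw
  obtain ⟨D', rfl⟩ : D ∣ Q := (hcop.pow_right (n := 4)).dvd_of_dvd_mul_right
    ⟨w ^ 2 - D * u ^ 4 - P * u ^ 2 * v ^ 2, by linear_combination hw⟩
  refine ⟨D, D', u, v, w, hD, rfl, hcop, ?_, mul_left_cancel₀ hD.ne_zero ?_⟩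
  · rw [← Rat.num_div_den m, ← hu, ← Int.cast_natCast m.den, hv]
    push_cast
    ring
  · linear_combination -hw

theorem sq_emod_four (a : ℤ) : a ^ 2 % 4 = 0 ∨ a ^ 2 % 4 = 1 := by
  rcases Int.even_or_odd a with ⟨b, rfl⟩ | ha
  · left; ring_nf; omega
  · exact .inr (Int.sq_mod_four_eq_one_of_odd ha)

theorem sq_ne_quartic_of_emod {D D' P u v w : ℤ} (hD : D % 4 = 2) (hD' : D' % 16 = 8)
    (hP : P % 4 = 1) (hv : Odd v) : w ^ 2 ≠ D * u ^ 4 + P * u ^ 2 * v ^ 2 + D' * v ^ 4 := by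
  intro h
  obtain ⟨i, rfl⟩ : ∃ i, D = 4 * i + 2 := ⟨D / 4, by omega⟩
  obtain ⟨j, rfl⟩ : ∃ j, D' = 16 * j + 8 := ⟨D' / 16, by omega⟩
  obtain ⟨k, rfl⟩ : ∃ k, P = 4 * k + 1 := ⟨P / 4, by omega⟩
  have sq_odd {a : ℤ} (ha : Odd a) : ∃ b, a ^ 2 = 4 * b + 1 :=
    ⟨a ^ 2 / 4, by have := Int.sq_mod_four_eq_one_of_odd ha; omega⟩
  obtain ⟨l, hl⟩ := sq_odd hv
  have hv4 : v ^ 4 = (4 * l + 1) ^ 2 := by rw [← hl]; ring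
  rw [hl, hv4] at h
  rcases Int.even_or_odd' u with ⟨r, rfl | rfl⟩
  · obtain ⟨s, rfl⟩ : 2 ∣ w := Int.prime_two.dvd_of_dvd_pow (n := 2)
      ⟨(2 * i + 1) * (2 * r) ^ 4 + 2 * (4 * k + 1) * r ^ 2 * (4 * l + 1)
        + (8 * j + 4) * (4 * l + 1) ^ 2, by rw [h]; ring⟩
    have hs : s ^ 2 = 4 * ((4 * i + 2) * r ^ 4 + k * r ^ 2 * (4 * l + 1) + r ^ 2 * l
        + j * (4 * l + 1) ^ 2 + 8 * l ^ 2 + 4 * l) + r ^ 2 + 2 := by linarith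
    have := sq_emod_four s
    have := sq_emod_four r
    omega
  · obtain ⟨g, hg⟩ := sq_odd (odd_two_mul_add_one r)
    have hu4 : (2 * r + 1) ^ 4 = (4 * g + 1) ^ 2 := by rw [← hg]; ring
    rw [hg, hu4] at h
    have hw : w ^ 2 = 4 * (i * (4 * g + 1) ^ 2 + 8 * g ^ 2 + 4 * g
        + k * (4 * g + 1) * (4 * l + 1) + 4 * g * l + g + l
        + (4 * j + 2) * (4 * l + 1) ^ 2) + 3 := by linarith
    have := sq_emod_four w
    omega

end TwoDescent

namespace XnsSeven

theorem isSquare_of_pos_of_mul_eq_sq {m Y : ℚ} (hm : 0 < m)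
    (h : m * (m ^ 2 - 42 * m - 7) = Y ^ 2) : IsSquare m := by
  obtain ⟨D, D', u, v, w, -, hD, hcop, rfl, hw⟩ :=
    exists_homogeneousSpace_point (P := -42) (Q := -7) hm.ne' (by rw [← h]; push_cast; ring)
  have hDpos : 0 < D := by exact_mod_cast pos_of_mul_pos_left hm (sq_nonneg _)
  lift D to ℕ using hDpos.le
  have hD7 : D ∣ 7 := Int.natCast_dvd_natCast.1 ⟨-D', by linear_combination hD⟩
  rcases (Nat.dvd_prime (by norm_num)).1 hD7 with rfl | rfl
  · simp [IsSquare.sq]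
  · exfalso
    have : Fact (Nat.Prime 7) := ⟨by norm_num⟩
    obtain rfl : D' = -1 := by push_cast at hD; omega
    have hv : (v : ZMod 7) ≠ 0 := by
      rw [Ne, ZMod.intCast_zmod_eq_zero_iff_dvd]
      intro h7
      exact absurd (hcop.isUnit_of_dvd' dvd_rfl h7) (by decide)
    have hmod : (w : ZMod 7) ^ 2 = -((v : ZMod 7) ^ 2) ^ 2 := by
      have h7 : (7 : ZMod 7) = 0 := rfl
      have hw' := congrArg (Int.cast : ℤ → ZMod 7) hw
      push_cast at hw'
      linear_combination hw' + (u ^ 4 - 6 * u ^ 2 * v ^ 2) * h7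
    exact ZMod.mod_four_ne_three_of_sq_eq_neg_sq' (pow_ne_zero 2 hv) hmod rfl

theorem isSquare_or_isSquare_seven_mul_of_mul_eq_sq {X Y : ℚ} (hX : X ≠ 0)
    (h : X * (X ^ 2 + 21 * X + 112) = Y ^ 2) : IsSquare X ∨ IsSquare (7 * X) := by
  have hpos : 0 < X := by
    have hquad : 0 < X ^ 2 + 21 * X + 112 := by nlinarith [sq_nonneg (X + 21 / 2)]
    exact lt_of_le_of_ne (nonneg_of_mul_nonneg_left (h ▸ sq_nonneg Y) hquad) hX.symm
  obtain ⟨D, D', u, v, w, hsf, hD, hcop, rfl, hw⟩ :=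
    exists_homogeneousSpace_point (P := 21) (Q := 112) hX (by rw [← h]; push_cast; ring)
  have hDpos : 0 < D := by exact_mod_cast pos_of_mul_pos_left hpos (sq_nonneg _)
  have hD14 : D ∣ 14 := (hsf.dvd_pow_iff_dvd four_ne_zero).1
    ((Dvd.intro D' hD).trans (by norm_num))
  have hv : 2 ∣ D → Odd v := fun h2 ↦ by
    rw [← Int.not_even_iff_odd, even_iff_two_dvd]
    exact fun h2' ↦ absurd (hcop.isUnit_of_dvd' h2 h2') (by decide)
  have hD' : D = 1 ∨ D = 2 ∨ D = 7 ∨ D = 14 := by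
    have := Int.le_of_dvd (by norm_num) hD14
    clear hw hsf hcop h hX hpos hD hv
    interval_cases D <;> omega
  rcases hD' with rfl | rfl | rfl | rfl
  · left; simp [IsSquare.sq]
  · exact absurd hw (sq_ne_quartic_of_emod rfl (by omega) rfl (hv (by norm_num)))
  · exact .inr ⟨7 * (u / v), by push_cast; ring⟩
  · exact absurd hw (sq_ne_quartic_of_emod rfl (by omega) rfl (hv (by norm_num)))

theorem exists_mul_sq_eq_quartic {z w : ℚ} (h : w ^ 2 = z ^ 4 - 42 * z ^ 2 - 7) :
    ∃ r : ℚ, 0 ≤ z * r ∧ (z * r) ^ 2 = r ^ 4 + 21 * r ^ 2 + 112 := by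
  suffices ∃ r : ℚ, (z * r) ^ 2 = r ^ 4 + 21 * r ^ 2 + 112 by
    obtain ⟨r, hr⟩ := this
    rcases le_total 0 (z * r) with hzr | hzr
    · exact ⟨r, hzr, hr⟩
    · exact ⟨-r, by linarith, by linear_combination hr⟩
  have of_isSquare {X : ℚ} (hX : X ^ 2 + 21 * X + 112 = z ^ 2 * X) (hsq : IsSquare X) :
      ∃ r : ℚ, (z * r) ^ 2 = r ^ 4 + 21 * r ^ 2 + 112 := by
    obtain ⟨r, rfl⟩ := hsq
    exact ⟨r, by linear_combination -hX⟩
  obtain ⟨X, hX⟩ : ∃ X, X = (z ^ 2 - 21 + w) / 2 := ⟨_, rfl⟩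
  have hrel : X ^ 2 + 21 * X + 112 = z ^ 2 * X := by rw [hX]; linear_combination (1 / 4) * h
  have hX0 : X ≠ 0 := by rintro rfl; norm_num at hrel
  rcases isSquare_or_isSquare_seven_mul_of_mul_eq_sq (Y := z * X) hX0
    (by linear_combination X * hrel) with hsq | hsq
  · exact of_isSquare hrel hsq
  · have hrel' : (112 / X) ^ 2 + 21 * (112 / X) + 112 = z ^ 2 * (112 / X) := by
      field_simp
      linear_combination hrel
    have hsq' : IsSquare (112 / X) := by
      rw [show 112 / X = 28 ^ 2 / (7 * X) by field_simp; norm_num]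
      exact (IsSquare.sq 28).div hsq
    exact of_isSquare hrel' hsq'

theorem exists_sq_eq_quartic_of_nonneg {r w : ℚ} (hw : 0 ≤ w)
    (h : w ^ 2 = r ^ 4 + 21 * r ^ 2 + 112) :
    ∃ e : ℚ, (2 * r * e) ^ 2 = e ^ 4 - 42 * e ^ 2 - 7 ∧ 4 * w * e ^ 2 = e ^ 4 + 7 := by
  obtain ⟨e, he⟩ : IsSquare (2 * r ^ 2 + 21 + 2 * w) :=
    isSquare_of_pos_of_mul_eq_sq (Y := 2 * r * (2 * r ^ 2 + 21 + 2 * w)) (by positivity)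
      (by linear_combination 4 * (2 * r ^ 2 + 21 + 2 * w) * h)
  rw [← sq] at he
  have hconj : e ^ 2 * (2 * r ^ 2 + 21 - 2 * w) = -7 := by rw [← he]; linear_combination -4 * h
  exact ⟨e, by linear_combination e ^ 2 * he + hconj, by linear_combination e ^ 2 * he - hconj⟩

theorem exists_halving_of_sq_eq_quartic {z w : ℚ} (h : w ^ 2 = z ^ 4 - 42 * z ^ 2 - 7) :
    ∃ e c : ℚ, c ^ 2 = e ^ 4 - 42 * e ^ 2 - 7 ∧ z * (2 * e * c) = e ^ 4 + 7 := by
  obtain ⟨r, hzr, hr⟩ := exists_mul_sq_eq_quartic h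
  obtain ⟨e, hc, he⟩ := exists_sq_eq_quartic_of_nonneg hzr hr
  exact ⟨e, 2 * r * e, hc, by linear_combination he⟩

theorem isCoprime_seven_of_sq_eq {a b c : ℤ} (hab : IsCoprime a b)
    (h : c ^ 2 = a ^ 4 - 42 * a ^ 2 * b ^ 2 - 7 * b ^ 4) : IsCoprime a 7 := by
  have h7 : Prime (7 : ℤ) := by norm_num
  refine (h7.coprime_iff_not_dvd.2 ?_).symm
  rintro ⟨a', rfl⟩
  obtain ⟨c', rfl⟩ : 7 ∣ c := h7.dvd_of_dvd_pow (n := 2)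
    ⟨343 * a' ^ 4 - 294 * a' ^ 2 * b ^ 2 - b ^ 4, by rw [h]; ring⟩
  have hb : 7 ∣ b := h7.dvd_of_dvd_pow (n := 4)
    ⟨49 * a' ^ 4 - 42 * a' ^ 2 * b ^ 2 - c' ^ 2, by linarith⟩
  exact h7.not_isUnit (hab.isUnit_of_dvd' (dvd_mul_right _ _) hb)

theorem isCoprime_two_mul_of_odd_of_dvd {a b c n : ℤ} (hab : IsCoprime a b)
    (h : c ^ 2 = a ^ 4 - 42 * a ^ 2 * b ^ 2 - 7 * b ^ 4) (hodd : Odd n)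
    (hn : n ∣ a ^ 4 + 7 * b ^ 4) : IsCoprime n (2 * a * b * c) := by
  have ha7 := isCoprime_seven_of_sq_eq hab h
  have h2 : IsCoprime n 2 := by
    obtain ⟨k, rfl⟩ := hodd
    exact ⟨1, -k, by ring⟩
  have h7 : IsCoprime n 7 :=
    (ha7.pow_left.add_mul_left_left (b ^ 4)).of_isCoprime_of_dvd_left hn
  have hb : IsCoprime n b := by
    refine IsCoprime.of_isCoprime_of_dvd_left ?_ hn
    rw [show a ^ 4 + 7 * b ^ 4 = a ^ 4 + b * (7 * b ^ 3) by ring]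
    exact hab.pow_left.add_mul_left_left _
  have ha : IsCoprime n a := by
    refine IsCoprime.of_isCoprime_of_dvd_left ?_ hn
    rw [show a ^ 4 + 7 * b ^ 4 = 7 * b ^ 4 + a * a ^ 3 by ring]
    exact (ha7.symm.mul_left hab.symm.pow_left).add_mul_left_left _
  obtain ⟨k, hk⟩ := hn
  have hquad : IsCoprime n (3 * a ^ 2 + b ^ 2) := by
    have h64 : IsCoprime n (2 ^ 6 * a ^ 4 + n * -k) :=
      (h2.pow_right.mul_right ha.pow_right).add_mul_left_right _
    rw [show 2 ^ 6 * a ^ 4 + n * -k = (3 * a ^ 2 + b ^ 2) * (7 * (3 * a ^ 2 - b ^ 2)) by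
      linear_combination hk] at h64
    exact h64.of_mul_right_left
  have hc : IsCoprime n (c ^ 2) := by
    rw [show c ^ 2 = 2 * 7 * b ^ 2 * -(3 * a ^ 2 + b ^ 2) + n * k by rw [h, ← hk]; ring]
    exact ((h2.mul_right h7).mul_right hb.pow_right).mul_right hquad.neg_right
      |>.add_mul_left_right _
  exact ((h2.mul_right ha).mul_right hb).mul_right ((IsCoprime.pow_right_iff two_pos).1 hc)

theorem exists_odd_dvd_pow_four_add_seven_mul {a b : ℤ} (hab : IsCoprime a b) :
    ∃ n, Odd n ∧ n ∣ a ^ 4 + 7 * b ^ 4 ∧ a ^ 4 + 7 * b ^ 4 ≤ 8 * n := by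
  have hN : 0 ≤ a ^ 4 + 7 * b ^ 4 := by positivity
  rcases Int.even_or_odd (a ^ 4 + 7 * b ^ 4) with heven | hodd
  · have hpar : Even a ↔ Even b := by
      simpa [Int.even_add, Int.even_mul, Int.even_pow, (by decide : ¬ Even (7 : ℤ))] using heven
    have ha : Odd a := by
      rw [← Int.not_even_iff_odd]
      intro ha
      exact Int.prime_two.not_isUnit (hab.isUnit_of_dvd' ha.two_dvd (hpar.1 ha).two_dvd)
    have hb : Odd b := by rwa [← Int.not_even_iff_odd, ← hpar, Int.not_even_iff_odd]
    obtain ⟨k, hk⟩ := Int.eight_dvd_sq_sub_one_of_odd ha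
    obtain ⟨l, hl⟩ := Int.eight_dvd_sq_sub_one_of_odd hb
    have h8 : a ^ 4 + 7 * b ^ 4 = 8 * (2 * (4 * k ^ 2 + k + 7 * (4 * l ^ 2 + l)) + 1) := by
      linear_combination (a ^ 2 + 8 * k + 1) * hk + 7 * (b ^ 2 + 8 * l + 1) * hl
    exact ⟨_, odd_two_mul_add_one _, Dvd.intro_left 8 h8.symm, h8.le⟩
  · exact ⟨_, hodd, dvd_rfl, by linarith⟩

theorem abs_lt_abs_of_halving {a b c p q : ℤ} (hb : b ≠ 0) (hq : q ≠ 0) (hab : IsCoprime a b)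
    (hc : c ^ 2 = a ^ 4 - 42 * a ^ 2 * b ^ 2 - 7 * b ^ 4)
    (h : p * (2 * a * b * c) = q * (a ^ 4 + 7 * b ^ 4)) : |a| < |p| := by
  have hb2 : 0 < b ^ 2 := by positivity
  have ha42 : 42 < a ^ 2 := by
    by_contra! hle
    nlinarith [sq_nonneg c, sq_nonneg a, mul_pos hb2 hb2]
  have hp : p ≠ 0 := by
    rintro rfl
    have : q * (a ^ 4 + 7 * b ^ 4) ≠ 0 := by positivity
    exact this (by rw [← h, zero_mul])
  obtain ⟨n, hodd, hn, hle⟩ := exists_odd_dvd_pow_four_add_seven_mul hab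
  have hnp : n ≤ |p| := by
    refine Int.le_of_dvd (abs_pos.2 hp) ((dvd_abs _ _).2 ?_)
    refine (isCoprime_two_mul_of_odd_of_dvd hab hc hodd hn).dvd_of_dvd_mul_right ?_
    exact h ▸ hn.mul_left q
  have ha7 : 7 ≤ |a| := by
    by_contra! hlt
    nlinarith [sq_abs a, abs_nonneg a]
  have ha4 : 8 * |a| ≤ a ^ 4 := by
    rw [← Even.pow_abs (by decide : Even 4) a]
    nlinarith [pow_le_pow_left₀ (by norm_num) ha7 3]
  linarith [mul_pos hb2 hb2, (by ring : b ^ 4 = b ^ 2 * b ^ 2)]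

theorem abs_num_lt_abs_num_of_halving {z e c : ℚ} (hc : c ^ 2 = e ^ 4 - 42 * e ^ 2 - 7)
    (h : z * (2 * e * c) = e ^ 4 + 7) : |e.num| < |z.num| := by
  have he : (e.num : ℚ) = e * e.den := (Rat.mul_den_eq_num e).symm
  have hz : (z.num : ℚ) = z * z.den := (Rat.mul_den_eq_num z).symm
  have hsq : (c * e.den ^ 2) ^ 2 =
      ((e.num ^ 4 - 42 * e.num ^ 2 * e.den ^ 2 - 7 * e.den ^ 4 : ℤ) : ℚ) := by
    push_cast
    rw [he]
    linear_combination (e.den : ℚ) ^ 4 * hc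
  obtain ⟨C, hC⟩ := exists_intCast_eq_of_sq_eq_intCast hsq
  refine abs_lt_abs_of_halving (c := C) (q := z.den) (mod_cast e.den_nz) (mod_cast z.den_nz)
    (Rat.isCoprime_num_den e) (by rw [← hC] at hsq; exact_mod_cast hsq) ?_
  rw [← Int.cast_inj (α := ℚ)]
  push_cast
  rw [hC, he, hz]
  linear_combination (z.den : ℚ) * (e.den : ℚ) ^ 4 * h

theorem sq_ne_pow_four_sub (z w : ℚ) : w ^ 2 ≠ z ^ 4 - 42 * z ^ 2 - 7 := by
  induction hn : z.num.natAbs using Nat.strong_induction_on generalizing z w with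
  | _ n ih =>
    intro h
    obtain ⟨e, c, hc, hz⟩ := exists_halving_of_sq_eq_quartic h
    exact ih _ (by zify [← hn]; exact abs_num_lt_abs_num_of_halving hc hz) e c rfl hc

theorem eq_zero_of_mul_eq_sq {m Y : ℚ} (h : m * (m ^ 2 - 42 * m - 7) = Y ^ 2) :
    m = 0 := by
  have not_pos {m Y : ℚ} (h : m * (m ^ 2 - 42 * m - 7) = Y ^ 2) : ¬ 0 < m := by
    intro hm
    obtain ⟨e, rfl⟩ := isSquare_of_pos_of_mul_eq_sq hm h
    have he : e ≠ 0 := by rintro rfl; simp at hm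
    refine sq_ne_pow_four_sub e (Y / e) ?_
    rw [div_pow, ← h]
    field_simp
  by_contra hm
  rcases lt_or_gt_of_ne hm with hneg | hpos
  · -- The substitution is translation by the 2-torsion point `(0, 0)`.
    refine not_pos (m := -7 / m) (Y := 7 * Y / m ^ 2) ?_ (div_pos_of_neg_of_neg (by norm_num) hneg)
    field_simp
    linear_combination h
  · exact not_pos h hpos

end XnsSeven

theorem quadratic_points_Xns7_newModel_general {K : Type*} [CommRing K] [Algebra ℚ K]
    (hK : Module.finrank ℚ K = 2) {x y : K} (h : y ^ 2 = -81 * x ^ 4 + 189 * x ^ 2 - 112) :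
    x ∈ Set.range (algebraMap ℚ K) := by
  by_contra hx
  obtain ⟨p, q, s, t, h₁, h₂⟩ := exists_coeffs_of_sq_eq_quartic hK (A := -81) (B := 189) (C := -112)
    (y := y) hx (by simp only [map_neg, map_ofNat]; linear_combination h)
  have hE := mul_quadratic_eq_sq_of_coeffs h₁ h₂
  have hm : (p ^ 2 + 81 * s ^ 2) / 9 = 0 := XnsSeven.eq_zero_of_mul_eq_sq
    (Y := (2 * -81 * q * s - p * (2 * -81 * t + 189 - (p ^ 2 - -81 * s ^ 2))) / 27)
    (by linear_combination (1 / 729) * hE)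
  obtain rfl : p = 0 := by nlinarith [sq_nonneg p, sq_nonneg s]
  obtain rfl : s = 0 := by nlinarith [sq_nonneg s]
  nlinarith [sq_nonneg q, sq_nonneg (t - 7 / 6)]

/-- Let `K` be a quadratic field (a field with a `ℚ`-algebra structure which is
2-dimensional over `ℚ`). If `x, y ∈ K` satisfy `y² = -81x⁴ + 189x² - 112`
(the affine patch `Z = 1` of the model of the non-split Cartan modular curve
`X_ns(7)` in weighted projective space), then `x` is rational. -/
theorem quadratic_points_Xns7_newModel
    (K : Type*) [Field K] [Algebra ℚ K] (hK : Module.finrank ℚ K = 2)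
    (x y : K) (h : y ^ 2 = -81 * x ^ 4 + 189 * x ^ 2 - 112) :
    x ∈ Set.range (algebraMap ℚ K) :=
  quadratic_points_Xns7_newModel_general hK h
end

section
/- The conic C ⊆ ℙ^2 given by Y^2 = -81X^2 + 189XZ - 112Z^2 has no rational points: there is no triple (X, Y, Z) ∈ ℚ^3 with (X, Y, Z) ≠ (0, 0, 0) satisfying Y^2 = -81X^2 + 189XZ - 112Z^2. -/
/-!
The binary quadratic form `-81X² + 189XZ - 112Z²` has discriminant `-567 = -7 · 9²` and negative
leading coefficient, so it is negative definite and cannot equal a square `Y²` unless `X`, `Y`, `Z`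
all vanish. The obstruction is at the real place.
-/

section OrderedRing

variable {R : Type*} [CommRing R]

theorem four_mul_mul_binary_quadratic (a b c x z : R) :
    4 * a * (a * x ^ 2 + b * x * z + c * z ^ 2) =
      (2 * a * x + b * z) ^ 2 - discrim a b c * z ^ 2 := by
  rw [discrim]
  ring

variable [LinearOrder R] [IsStrictOrderedRing R] {a b c x y z : R}

theorem ne_zero_of_discrim_neg (hdisc : discrim a b c < 0) : a ≠ 0 := by
  rintro rfl
  have hb : b ^ 2 < 0 := by simpa [discrim] using hdisc
  exact hb.not_ge (sq_nonneg b)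

theorem sq_sub_discrim_mul_sq_pos (hdisc : discrim a b c < 0) (hxz : x ≠ 0 ∨ z ≠ 0) :
    0 < (2 * a * x + b * z) ^ 2 - discrim a b c * z ^ 2 := by
  rcases eq_or_ne z 0 with rfl | hz
  · have hx : x ≠ 0 := by simpa using hxz
    have hlin : 2 * a * x + b * 0 ≠ 0 := by simp [ne_zero_of_discrim_neg hdisc, hx]
    simpa using sq_pos_of_ne_zero hlin
  · have hdz : discrim a b c * z ^ 2 < 0 := mul_neg_of_neg_of_pos hdisc (sq_pos_of_ne_zero hz)
    linarith [sq_nonneg (2 * a * x + b * z)]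

theorem binary_quadratic_neg_of_discrim_neg (ha : a < 0) (hdisc : discrim a b c < 0)
    (hxz : x ≠ 0 ∨ z ≠ 0) : a * x ^ 2 + b * x * z + c * z ^ 2 < 0 := by
  have hpos : 0 < 4 * a * (a * x ^ 2 + b * x * z + c * z ^ 2) := by
    rw [four_mul_mul_binary_quadratic]
    exact sq_sub_discrim_mul_sq_pos hdisc hxz
  exact neg_of_mul_pos_right hpos (by linarith)

theorem eq_zero_of_sq_eq_binary_quadratic (ha : a < 0) (hdisc : discrim a b c < 0)
    (h : y ^ 2 = a * x ^ 2 + b * x * z + c * z ^ 2) : x = 0 ∧ y = 0 ∧ z = 0 := by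
  have hxz : x = 0 ∧ z = 0 := by
    by_contra hne
    have hneg := binary_quadratic_neg_of_discrim_neg ha hdisc (not_and_or.mp hne)
    exact (h ▸ hneg).not_ge (sq_nonneg y)
  obtain ⟨rfl, rfl⟩ := hxz
  have hy : y ^ 2 = 0 := by simpa using h
  exact ⟨rfl, sq_eq_zero_iff.mp hy, rfl⟩

end OrderedRing

theorem conic_has_no_rational_points_general {R : Type*} [CommRing R] [LinearOrder R]
    [IsStrictOrderedRing R] :
    ¬ ∃ X Y Z : R, (X, Y, Z) ≠ (0, 0, 0) ∧
      Y ^ 2 = -81 * X ^ 2 + 189 * X * Z - 112 * Z ^ 2 := by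
  rintro ⟨X, Y, Z, hne, h⟩
  have hdisc : discrim (-81 : R) 189 (-112) < 0 := by norm_num [discrim]
  have hconic : Y ^ 2 = -81 * X ^ 2 + 189 * X * Z + -112 * Z ^ 2 := by linear_combination h
  obtain ⟨rfl, rfl, rfl⟩ := eq_zero_of_sq_eq_binary_quadratic (by norm_num) hdisc hconic
  exact hne rfl

/-- The conic `C ⊆ ℙ²` given by `Y² = -81X² + 189XZ - 112Z²` has no rational
points: there is no nonzero triple `(X, Y, Z) ∈ ℚ³` satisfying the equation. -/
theorem conic_has_no_rational_points :
    ¬ ∃ X Y Z : ℚ, (X, Y, Z) ≠ (0, 0, 0) ∧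
      Y ^ 2 = -81 * X ^ 2 + 189 * X * Z - 112 * Z ^ 2 :=
  conic_has_no_rational_points_general
end

section
/- Let K be a quadratic field. If u, v, w ∈ K satisfy both v^2 + v = u^3 - u^2 - 7u + 10 and w^2 = -(4u^3 + 7u^2 - 6u + 19), then u is rational and v is rational. (This is the main theorem for p = 11: every quadratic point on this affine model of X_ns(11) maps under the degeneracy map (u,v,w) ↦ (u,v) to a rational point of X_ns^+(11), i.e. X_ns(11) has no exceptional quadratic points.) -/
/-!
A quadratic point with irrational `u` and its conjugate span a line defined over `ℚ`, whose third
intersection with the elliptic curve `t² = -(4u³ + 7u² - 6u + 19)` is an affine rational point. So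
it suffices that this curve has none. Moving to the model `Y² = -(3X + 1)(X³ + X² + 4X - 2)` with
the Weierstrass point `X = -1/3` as origin, a 2-descent in `ℤ[θ]`, `θ³ + θ² + 4θ - 2 = 0`, shows
that every rational point is a double; Minkowski's theorem, applied to a sublattice of `ℤ[θ]`
depending on the point, replaces the computation of class group and units. For `X = p / q`,
duplication increases the power of `2` dividing `3p + q`, so a point that can be halved
indefinitely cannot exist.

If `u` is rational then `w` is irrational, and an irrational `v` has the form `αw - 1/2`. This gives
a rational point on the genus 2 curve `z² = -(4u³ + 7u² - 6u + 19)(4u³ - 4u² - 28u + 41)`. There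
is none: the resultant of the two cubics and congruences modulo `11` and powers of `2` determine the
denominator of `u` modulo `32`, but `-1` is a square modulo each odd divisor of it.
-/

namespace XNonsplit11

/-! ### Points over quadratic extensions -/

section QuadraticExtension

variable {F K : Type*} [Field F] [Field K] [Algebra F K] {u v w : K}

theorem eq_zero_of_mul_add_eq_zero (hu : u ∉ Set.range (algebraMap F K)) {s t : F}
    (h : algebraMap F K s * u + algebraMap F K t = 0) : s = 0 ∧ t = 0 := by
  obtain rfl : s = 0 := by
    by_contra hs
    refine hu ⟨-t / s, ?_⟩
    rw [map_div₀, map_neg, div_eq_iff ((map_ne_zero _).mpr hs)]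
    linear_combination -h
  simpa using h

theorem exists_eq_mul_add (hK : Module.finrank F K = 2) (hu : u ∉ Set.range (algebraMap F K))
    (w : K) : ∃ α β : F, w = algebraMap F K α * u + algebraMap F K β := by
  have hli : LinearIndependent F ![u, 1] := by
    refine LinearIndependent.pair_iff.mpr fun s t h => eq_zero_of_mul_add_eq_zero hu ?_
    rwa [Algebra.smul_def, Algebra.smul_def, mul_one] at h
  have : FiniteDimensional F K := Module.finite_of_finrank_pos (by omega)
  have hw : w ∈ Submodule.span F (Set.range ![u, 1]) :=
    hli.span_eq_top_of_card_eq_finrank' (by simp [hK]) ▸ Submodule.mem_top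
  rw [Matrix.range_cons_cons_empty, Submodule.mem_span_pair] at hw
  obtain ⟨α, β, rfl⟩ := hw
  exact ⟨α, β, by rw [Algebra.smul_def, Algebra.smul_def, mul_one]⟩

/-- The line through a quadratic point and its conjugate is defined over the base field, hence so is
its third intersection with the cubic. -/
theorem exists_sq_eq_cubic_of_notMem_range (hK : Module.finrank F K = 2) {c₀ c₁ c₂ c₃ : F}
    (hc : c₃ ≠ 0) (hu : u ∉ Set.range (algebraMap F K))
    (h : w ^ 2 = algebraMap F K c₃ * u ^ 3 + algebraMap F K c₂ * u ^ 2 + algebraMap F K c₁ * u +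
      algebraMap F K c₀) :
    ∃ X t : F, t ^ 2 = c₃ * X ^ 3 + c₂ * X ^ 2 + c₁ * X + c₀ := by
  obtain ⟨α, β, rfl⟩ := exists_eq_mul_add hK hu w
  obtain ⟨s, t, hst⟩ := exists_eq_mul_add hK hu (u ^ 2)
  have hcoord : algebraMap F K (c₃ * (s ^ 2 + t) + c₂ * s + c₁ - α ^ 2 * s - 2 * α * β) * u +
      algebraMap F K (c₃ * (s * t) + c₂ * t + c₀ - α ^ 2 * t - β ^ 2) = 0 := by
    simp only [map_add, map_sub, map_mul, map_pow, map_ofNat]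
    linear_combination -h - (algebraMap F K c₃ * (u + algebraMap F K s) + algebraMap F K c₂ -
      algebraMap F K α ^ 2) * hst
  obtain ⟨hlin, hconst⟩ := eq_zero_of_mul_add_eq_zero hu hcoord
  obtain ⟨X, hX⟩ : ∃ X, c₃ * X = α ^ 2 - c₂ - c₃ * s := ⟨_, mul_div_cancel₀ _ hc⟩
  refine ⟨X, α * X + β, ?_⟩
  linear_combination (-X ^ 2 + s * X + t) * hX - X * hlin - hconst

theorem isSquare_mul_of_notMem_range (hK : Module.finrank F K = 2) {D E : F}
    (hw : w ∉ Set.range (algebraMap F K)) (hD : w ^ 2 = algebraMap F K D)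
    (hv : v ∉ Set.range (algebraMap F K)) (hE : v ^ 2 + v = algebraMap F K E) :
    IsSquare (D * (4 * E + 1)) := by
  obtain ⟨α, β, rfl⟩ := exists_eq_mul_add hK hw v
  have hcoord : algebraMap F K (α * (2 * β + 1)) * w +
      algebraMap F K (β ^ 2 + β + α ^ 2 * D - E) = 0 := by
    simp only [map_add, map_sub, map_mul, map_pow, map_one, map_ofNat]
    linear_combination hE - algebraMap F K α ^ 2 * hD
  obtain ⟨hαβ, hconst⟩ := eq_zero_of_mul_add_eq_zero hw hcoord
  have hα : α ≠ 0 := by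
    rintro rfl
    exact hv ⟨β, by simp⟩
  have hβ : 2 * β + 1 = 0 := (mul_eq_zero.mp hαβ).resolve_left hα
  exact ⟨2 * α * D, by linear_combination -4 * D * hconst + D * (2 * β + 1) * hβ⟩

end QuadraticExtension

/-! ### Minkowski's theorem -/

open MeasureTheory in
theorem exists_ne_zero_vecMul_mem {ι : Type*} [Fintype ι] [DecidableEq ι] {A : Matrix ι ι ℝ}
    (hA : A.det ≠ 0) {s : Set (ι → ℝ)} (hsymm : ∀ x ∈ s, -x ∈ s) (hconv : Convex ℝ s)
    (hvol : ENNReal.ofReal |A.det| * 2 ^ Fintype.card ι < volume s) :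
    ∃ v : ι → ℤ, v ≠ 0 ∧ Matrix.vecMul (fun i => (v i : ℝ)) A ∈ s := by
  have hli : LinearIndependent ℝ A.row := by
    rw [Matrix.linearIndependent_rows_iff_isUnit, Matrix.isUnit_iff_isUnit_det]
    exact isUnit_iff_ne_zero.mpr hA
  let b : Module.Basis ι ℝ (ι → ℝ) := .mk hli
    (hli.span_eq_top_of_card_eq_finrank' (by simp)).ge
  have hb : ∀ i, b i = A i := Module.Basis.mk_apply hli _
  have hlt : volume (ZSpan.fundamentalDomain b) * 2 ^ Module.finrank ℝ (ι → ℝ) < volume s := by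
    rwa [ZSpan.volume_fundamentalDomain, Module.finrank_fintype_fun_eq_card,
      show Matrix.of b = A from Matrix.ext fun i j => congrFun (hb i) j]
  have : Countable (Submodule.span ℤ (Set.range b)).toAddSubgroup :=
    inferInstanceAs (Countable (Submodule.span ℤ (Set.range b)))
  obtain ⟨⟨x, hx⟩, hx0, hxs⟩ := exists_ne_zero_mem_lattice_of_measure_mul_two_pow_lt_measure
    (L := (Submodule.span ℤ (Set.range b)).toAddSubgroup)
    (ZSpan.isAddFundamentalDomain b volume) hsymm hconv hlt
  obtain ⟨c, hc⟩ := (Submodule.mem_span_range_iff_exists_fun ℤ).mp hx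
  have hcx : Matrix.vecMul (fun i => (c i : ℝ)) A = x := by
    rw [← hc, Matrix.vecMul_eq_sum]
    exact Finset.sum_congr rfl fun i _ => by rw [hb, Int.cast_smul_eq_zsmul]
  refine ⟨c, ?_, hcx ▸ hxs⟩
  rintro rfl
  exact hx0 (Subtype.ext (by simp [← hc]))

open MeasureTheory in
theorem exists_ne_zero_sum_vecMul_sq_lt {A : Matrix (Fin 3) (Fin 3) ℝ} (hA : A.det ≠ 0) {r : ℝ}
    (hr : 0 < r) (hlt : 6 * |A.det| < Real.pi * r ^ 3) :
    ∃ v : Fin 3 → ℤ, v ≠ 0 ∧ ∑ i, Matrix.vecMul (fun i => (v i : ℝ)) A i ^ 2 < r ^ 2 := by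
  let s : Set (Fin 3 → ℝ) := {x | ∑ i, x i ^ 2 < r ^ 2}
  have hs : s = WithLp.toLp 2 ⁻¹' Metric.ball (0 : EuclideanSpace ℝ (Fin 3)) r := by
    ext x
    simp only [s, Set.mem_ofPred_eq, Set.mem_preimage, mem_ball_zero_iff, EuclideanSpace.norm_eq,
      Real.norm_eq_abs, sq_abs]
    rw [Real.sqrt_lt' hr]
  refine exists_ne_zero_vecMul_mem (s := s) hA (fun x hx => by simpa [s] using hx) ?_ ?_
  · rw [hs]
    exact (convex_ball _ _).is_linear_preimage
      (WithLp.linearEquiv 2 ℝ (Fin 3 → ℝ)).symm.toLinearMap.isLinear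
  · rw [hs, (PiLp.volume_preserving_toLp (Fin 3)).measure_preimage
      measurableSet_ball.nullMeasurableSet, EuclideanSpace.volume_ball_fin_three, Fintype.card_fin,
      show (2 : ENNReal) ^ 3 = ENNReal.ofReal 8 by norm_num, ← ENNReal.ofReal_mul (abs_nonneg _),
      ← ENNReal.ofReal_pow hr.le, ← ENNReal.ofReal_mul (by positivity)]
    exact (ENNReal.ofReal_lt_ofReal_iff (by positivity)).mpr (by linarith)

/-! ### The cubic order -/

/-- The order `R[θ]`, where `θ³ + θ² + 4θ - 2 = 0`, in coordinates with respect to `1, θ, θ²`.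
For `R = ℤ` it is the maximal order of the cubic field of discriminant `-484`; reductions of it
are obtained by taking `R = ZMod m`. -/
@[ext] structure CubicOrder (R : Type*) where
  x : R
  y : R
  z : R

namespace CubicOrder

instance {R : Type*} [DecidableEq R] : DecidableEq (CubicOrder R) := fun _ _ =>
  decidable_of_iff _ CubicOrder.ext_iff.symm

section Ring

variable {R : Type*} [CommRing R]

instance : Zero (CubicOrder R) := ⟨⟨0, 0, 0⟩⟩
instance : One (CubicOrder R) := ⟨⟨1, 0, 0⟩⟩
instance : Add (CubicOrder R) := ⟨fun a b => ⟨a.x + b.x, a.y + b.y, a.z + b.z⟩⟩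
instance : Neg (CubicOrder R) := ⟨fun a => ⟨-a.x, -a.y, -a.z⟩⟩
instance : NatCast (CubicOrder R) := ⟨fun n => ⟨n, 0, 0⟩⟩
instance : IntCast (CubicOrder R) := ⟨fun n => ⟨n, 0, 0⟩⟩
instance : Mul (CubicOrder R) := ⟨fun a b =>
  ⟨a.x * b.x + 2 * (a.y * b.z + a.z * b.y) - 2 * (a.z * b.z),
   a.x * b.y + a.y * b.x - 4 * (a.y * b.z + a.z * b.y) + 6 * (a.z * b.z),
   a.x * b.z + a.y * b.y + a.z * b.x - (a.y * b.z + a.z * b.y) - 3 * (a.z * b.z)⟩⟩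

@[simp] theorem zero_x : (0 : CubicOrder R).x = 0 := rfl
@[simp] theorem zero_y : (0 : CubicOrder R).y = 0 := rfl
@[simp] theorem zero_z : (0 : CubicOrder R).z = 0 := rfl
@[simp] theorem one_x : (1 : CubicOrder R).x = 1 := rfl
@[simp] theorem one_y : (1 : CubicOrder R).y = 0 := rfl
@[simp] theorem one_z : (1 : CubicOrder R).z = 0 := rfl
@[simp] theorem add_x (a b : CubicOrder R) : (a + b).x = a.x + b.x := rfl
@[simp] theorem add_y (a b : CubicOrder R) : (a + b).y = a.y + b.y := rfl
@[simp] theorem add_z (a b : CubicOrder R) : (a + b).z = a.z + b.z := rfl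
@[simp] theorem neg_x (a : CubicOrder R) : (-a).x = -a.x := rfl
@[simp] theorem neg_y (a : CubicOrder R) : (-a).y = -a.y := rfl
@[simp] theorem neg_z (a : CubicOrder R) : (-a).z = -a.z := rfl
@[simp] theorem natCast_x (n : ℕ) : (n : CubicOrder R).x = n := rfl
@[simp] theorem natCast_y (n : ℕ) : (n : CubicOrder R).y = 0 := rfl
@[simp] theorem natCast_z (n : ℕ) : (n : CubicOrder R).z = 0 := rfl
@[simp] theorem intCast_x (n : ℤ) : (n : CubicOrder R).x = n := rfl
@[simp] theorem intCast_y (n : ℤ) : (n : CubicOrder R).y = 0 := rfl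
@[simp] theorem intCast_z (n : ℤ) : (n : CubicOrder R).z = 0 := rfl
@[simp] theorem mul_x (a b : CubicOrder R) : (a * b).x =
  a.x * b.x + 2 * (a.y * b.z + a.z * b.y) - 2 * (a.z * b.z) := rfl
@[simp] theorem mul_y (a b : CubicOrder R) : (a * b).y =
  a.x * b.y + a.y * b.x - 4 * (a.y * b.z + a.z * b.y) + 6 * (a.z * b.z) := rfl
@[simp] theorem mul_z (a b : CubicOrder R) : (a * b).z =
  a.x * b.z + a.y * b.y + a.z * b.x - (a.y * b.z + a.z * b.y) - 3 * (a.z * b.z) := rfl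

instance : CommRing (CubicOrder R) where
  add_assoc a b c := by ext <;> simp <;> ring
  zero_add a := by ext <;> simp
  add_zero a := by ext <;> simp
  add_comm a b := by ext <;> simp <;> ring
  neg_add_cancel a := by ext <;> simp
  mul_assoc a b c := by ext <;> simp <;> ring
  one_mul a := by ext <;> simp
  mul_one a := by ext <;> simp
  zero_mul a := by ext <;> simp
  mul_zero a := by ext <;> simp
  left_distrib a b c := by ext <;> simp <;> ring
  right_distrib a b c := by ext <;> simp <;> ring
  mul_comm a b := by ext <;> simp <;> ring
  nsmul := nsmulRec
  zsmul := zsmulRec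
  natCast_zero := by ext <;> simp
  natCast_succ n := by ext <;> simp
  intCast_ofNat n := by ext <;> simp
  intCast_negSucc n := by ext <;> simp

@[simp] theorem sub_x (a b : CubicOrder R) : (a - b).x = a.x - b.x := (sub_eq_add_neg _ _).symm
@[simp] theorem sub_y (a b : CubicOrder R) : (a - b).y = a.y - b.y := (sub_eq_add_neg _ _).symm
@[simp] theorem sub_z (a b : CubicOrder R) : (a - b).z = a.z - b.z := (sub_eq_add_neg _ _).symm
@[simp] theorem ofNat_x (n : ℕ) [n.AtLeastTwo] : (ofNat(n) : CubicOrder R).x = ofNat(n) := rfl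
@[simp] theorem ofNat_y (n : ℕ) [n.AtLeastTwo] : (ofNat(n) : CubicOrder R).y = 0 := rfl
@[simp] theorem ofNat_z (n : ℕ) [n.AtLeastTwo] : (ofNat(n) : CubicOrder R).z = 0 := rfl

/-- The homomorphism `R[θ] → S` extending `f` and sending `θ` to a given root of its minimal
polynomial. -/
def lift {S : Type*} [CommRing S] (f : R →+* S) (t : S) (ht : t ^ 3 + t ^ 2 + 4 * t - 2 = 0) :
    CubicOrder R →+* S where
  toFun a := f a.x + f a.y * t + f a.z * t ^ 2
  map_zero' := by simp
  map_one' := by simp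
  map_add' a b := by simp only [add_x, add_y, add_z, map_add]; ring
  map_mul' a b := by
    simp only [mul_x, mul_y, mul_z, map_sub, map_add, map_mul, map_ofNat]
    linear_combination (-(f a.y * f b.z + f a.z * f b.y) - f a.z * f b.z * (t - 1)) * ht

/-- The norm of `R[θ]` over `R`. -/
def norm (a : CubicOrder R) : R :=
  a.x ^ 3 - a.x ^ 2 * a.y - 7 * a.x ^ 2 * a.z + 4 * a.x * a.y ^ 2 - 10 * a.x * a.y * a.z
    + 20 * a.x * a.z ^ 2 + 2 * a.y ^ 3 - 2 * a.y ^ 2 * a.z + 8 * a.y * a.z ^ 2 + 4 * a.z ^ 3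

/-- The product of the two other conjugates. -/
def adjugate (a : CubicOrder R) : CubicOrder R where
  x := a.x ^ 2 - a.x * a.y - 7 * a.x * a.z + 4 * a.y ^ 2 - 6 * a.y * a.z + 18 * a.z ^ 2
  y := -a.x * a.y + a.y ^ 2 - a.y * a.z + 6 * a.z ^ 2
  z := -a.x * a.z + a.y ^ 2 - a.y * a.z + 4 * a.z ^ 2

theorem norm_mul (a b : CubicOrder R) : norm (a * b) = norm a * norm b := by
  simp only [norm, mul_x, mul_y, mul_z]
  ring

theorem norm_intCast (n : ℤ) : norm (n : CubicOrder R) = n ^ 3 := by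
  simp [norm]

end Ring

theorem mul_adjugate (a : CubicOrder ℤ) : a * adjugate a = (norm a : ℤ) := by
  ext <;> simp only [mul_x, mul_y, mul_z, intCast_x, intCast_y, intCast_z, Int.cast_id, adjugate,
    norm] <;> ring

theorem eq_zero_of_descent {P : CubicOrder ℤ → Prop} {l : ℤ} (hl : 1 < l)
    (h : ∀ b, P b → ∃ c, b = (l : CubicOrder ℤ) * c ∧ P c) : ∀ b, P b → b = 0 := by
  intro b
  induction hn : b.x.natAbs + b.y.natAbs + b.z.natAbs using Nat.strong_induction_on generalizing b
  case h n ih =>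
  subst hn
  intro hb
  by_contra hne
  obtain ⟨c, rfl, hc⟩ := h b hb
  have hc0 : c ≠ 0 := by
    rintro rfl
    exact hne (mul_zero _)
  refine hc0 (ih _ ?_ c rfl hc)
  have hpos : 0 < c.x.natAbs + c.y.natAbs + c.z.natAbs := by
    by_contra h0
    exact hc0 (by ext <;> simp <;> omega)
  have hl' : 1 < l.natAbs := by omega
  simp only [mul_x, mul_y, mul_z, intCast_x, intCast_y, intCast_z, zero_mul, mul_zero, add_zero,
    sub_zero, Int.natAbs_mul]
  nlinarith

theorem eq_zero_of_norm_eq_zero {b : CubicOrder ℤ} (hb : norm b = 0) : b = 0 := by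
  refine eq_zero_of_descent (P := fun b => norm b = 0) (l := 5) (by norm_num) (fun b hb => ?_) b hb
  have hmod : ∀ x y z : ZMod 5, norm ⟨x, y, z⟩ = 0 → x = 0 ∧ y = 0 ∧ z = 0 := by decide
  have hb5 := congrArg (Int.cast : ℤ → ZMod 5) hb
  simp only [norm, Int.cast_zero] at hb5
  push_cast at hb5
  obtain ⟨hx, hy, hz⟩ := hmod _ _ _ hb5
  rw [ZMod.intCast_zmod_eq_zero_iff_dvd] at hx hy hz
  obtain ⟨x, hx⟩ := hx
  obtain ⟨y, hy⟩ := hy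
  obtain ⟨z, hz⟩ := hz
  have hbc : b = ((5 : ℤ) : CubicOrder ℤ) * ⟨x, y, z⟩ := by
    ext <;> simp [hx, hy, hz]
  refine ⟨_, hbc, ?_⟩
  rw [hbc, norm_mul, norm_intCast] at hb
  simpa using hb

instance : NoZeroDivisors (CubicOrder ℤ) where
  eq_zero_or_eq_zero_of_mul_eq_zero {a b} hab := by
    have h := congrArg norm hab
    rw [norm_mul] at h
    exact (mul_eq_zero.mp (h.trans (by simp [norm]))).imp eq_zero_of_norm_eq_zero
      eq_zero_of_norm_eq_zero

section NormForm

/-- The linear form `p - qθ`. -/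
def linear (p q : ℤ) : CubicOrder ℤ := ⟨p, -q, 0⟩

/-- The binary cubic form `N(p - qθ)`. -/
def normForm (p q : ℤ) : ℤ := p ^ 3 + p ^ 2 * q + 4 * p * q ^ 2 - 2 * q ^ 3

theorem norm_linear (p q : ℤ) : norm (linear p q) = normForm p q := by
  simp only [norm, linear, normForm]
  ring

theorem linear_eq (p q : ℤ) : linear p q = p - q * (⟨0, 1, 0⟩ : CubicOrder ℤ) := by
  ext <;> simp [linear]

theorem linear_ne_zero {p q : ℤ} (h : IsCoprime p q) : linear p q ≠ 0 := by
  intro h0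
  have hp : p = 0 := congrArg x h0
  have hq : q = 0 := neg_eq_zero.mp (congrArg y h0)
  rw [hp, hq] at h
  exact not_isCoprime_zero_zero h

/-- The value at `k` of the polynomial in `θ` representing `a`; a ring homomorphism modulo the
value `normForm k 1` of the minimal polynomial of `θ` at `k`. -/
def evalAt (k : ℤ) (a : CubicOrder ℤ) : ℤ := a.x + a.y * k + a.z * k ^ 2

theorem normForm_dvd_evalAt_mul_sub (k : ℤ) (a b : CubicOrder ℤ) :
    normForm k 1 ∣ evalAt k a * evalAt k b - evalAt k (a * b) := by
  refine ⟨a.y * b.z + a.z * b.y + a.z * b.z * (k - 1), ?_⟩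
  simp only [evalAt, normForm, mul_x, mul_y, mul_z]
  ring

theorem isCoprime_normForm {p q : ℤ} (h : IsCoprime p q) : IsCoprime q (normForm p q) := by
  have e : normForm p q = p ^ 3 + q * (p ^ 2 + 4 * p * q - 2 * q ^ 2) := by
    simp only [normForm]
    ring
  exact e ▸ (IsCoprime.pow_right h.symm).add_mul_left_right _

/-- `ℤ[θ] / (p - qθ)` is `ℤ / N(p - qθ)`, with `θ` mapped to the residue of `k = p / q`. -/
theorem exists_residue {p q : ℤ} (h : IsCoprime p q) :
    ∃ k, normForm p q ∣ p - q * k ∧ normForm p q ∣ normForm k 1 ∧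
      ∀ a, normForm p q ∣ evalAt k a → linear p q ∣ a := by
  obtain ⟨q', j, hj⟩ := isCoprime_normForm h
  have hk : linear p q * adjugate (linear p q) = normForm p q := by
    rw [mul_adjugate, norm_linear]
  refine ⟨q' * p, ⟨p * j, by linear_combination -p * hj⟩, ?_, ?_⟩
  · refine ⟨q' ^ 3 + j * ((q' * p) ^ 2 + 4 * (q' * p) * (1 + q' * q)
      - 2 * (1 + q' * q + (q' * q) ^ 2)), ?_⟩
    simp only [normForm] at hj ⊢
    linear_combination -((q' * p) ^ 2 + 4 * (q' * p) * (1 + q' * q)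
      - 2 * (1 + q' * q + (q' * q) ^ 2)) * hj
  · rintro a ⟨c, hc⟩
    have hθ : (⟨-(q' * p), 1, 0⟩ : CubicOrder ℤ)
        = linear p q * (-q' + j * ⟨0, 1, 0⟩ * adjugate (linear p q)) := by
      have hθ' : (⟨-(q' * p), 1, 0⟩ : CubicOrder ℤ) = ⟨0, 1, 0⟩ - q' * p := by ext <;> simp
      have hj' : (q' : CubicOrder ℤ) * q + j * normForm p q = 1 := by
        simpa using congrArg (Int.cast : ℤ → CubicOrder ℤ) hj
      rw [hθ']
      linear_combination q' * linear_eq p q - (j * ⟨0, 1, 0⟩ : CubicOrder ℤ) * hk -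
        (⟨0, 1, 0⟩ : CubicOrder ℤ) * hj'
    refine ⟨adjugate (linear p q) * c + (-q' + j * ⟨0, 1, 0⟩ * adjugate (linear p q)) *
      ⟨a.y + a.z * (q' * p), a.z, 0⟩, ?_⟩
    calc a = (evalAt (q' * p) a : ℤ) + ⟨-(q' * p), 1, 0⟩ * ⟨a.y + a.z * (q' * p), a.z, 0⟩ := by
          ext <;> simp only [evalAt, add_x, add_y, add_z, mul_x, mul_y, mul_z, intCast_x, intCast_y,
            intCast_z, Int.cast_id] <;> ring
      _ = _ := by rw [hc, hθ, Int.cast_mul, ← hk]; ring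

end NormForm

theorem exists_real_root :
    ∃ t : ℝ, t ^ 3 + t ^ 2 + 4 * t - 2 = 0 ∧ 0.4328 < t ∧ t < 0.433 := by
  have hc : ContinuousOn (fun t : ℝ => t ^ 3 + t ^ 2 + 4 * t - 2)
      (Set.Icc 0.4328 0.433) := by fun_prop
  obtain ⟨t, ⟨h1, h2⟩, ht⟩ := intermediate_value_Ioo (by norm_num) hc
    (show (0 : ℝ) ∈ Set.Ioo _ _ by constructor <;> norm_num)
  exact ⟨t, ht, h1, h2⟩

/-- The real root of `t³ + t² + 4t - 2`. -/
noncomputable def realRoot : ℝ := exists_real_root.choose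

theorem realRoot_eq : realRoot ^ 3 + realRoot ^ 2 + 4 * realRoot - 2 = 0 :=
  exists_real_root.choose_spec.1

theorem lt_realRoot : 0.4328 < realRoot := exists_real_root.choose_spec.2.1

theorem realRoot_lt : realRoot < 0.433 := exists_real_root.choose_spec.2.2

/-- The imaginary part of the complex roots of `t³ + t² + 4t - 2`. -/
noncomputable def rootIm : ℝ := √((3 * realRoot ^ 2 + 2 * realRoot + 15) / 4)

theorem rootIm_sq : rootIm ^ 2 = (3 * realRoot ^ 2 + 2 * realRoot + 15) / 4 :=
  Real.sq_sqrt (by nlinarith [lt_realRoot])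

theorem rootIm_pos : 0 < rootIm :=
  Real.sqrt_pos.mpr (by nlinarith [lt_realRoot])

/-- The root of `t³ + t² + 4t - 2` in the upper half plane. -/
noncomputable def complexRoot : ℂ := ⟨-(1 + realRoot) / 2, rootIm⟩

theorem complexRoot_eq : complexRoot ^ 3 + complexRoot ^ 2 + 4 * complexRoot - 2 = 0 := by
  apply Complex.ext
  · simp only [complexRoot, neg_add_rev, pow_succ, pow_zero, one_mul, Complex.sub_re,
      Complex.add_re, Complex.mul_re, Complex.mul_im, Complex.re_ofNat, Complex.im_ofNat,
      zero_mul, sub_zero, Complex.zero_re]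
    linear_combination (3 * realRoot + 1) / 2 * rootIm_sq + realRoot_eq
  · simp only [complexRoot, neg_add_rev, pow_succ, pow_zero, one_mul, Complex.sub_im,
      Complex.add_im, Complex.mul_im, Complex.mul_re, Complex.re_ofNat, Complex.im_ofNat,
      zero_mul, add_zero, sub_zero, Complex.zero_im]
    linear_combination -rootIm * rootIm_sq

/-- The embedding of `ℤ[θ]` at its real place. -/
noncomputable def realPlace : CubicOrder ℤ →+* ℝ := lift (Int.castRingHom ℝ) realRoot realRoot_eq

/-- The embedding of `ℤ[θ]` at its complex place. -/
noncomputable def complexPlace : CubicOrder ℤ →+* ℂ :=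
  lift (Int.castRingHom ℂ) complexRoot complexRoot_eq

theorem realPlace_apply (a : CubicOrder ℤ) :
    realPlace a = a.x + a.y * realRoot + a.z * realRoot ^ 2 := rfl

theorem complexPlace_re (a : CubicOrder ℤ) : (complexPlace a).re =
    a.x + a.y * (-(1 + realRoot) / 2) + a.z * ((-(1 + realRoot) / 2) ^ 2 - rootIm ^ 2) := by
  simp [complexPlace, lift, complexRoot, pow_two]

theorem complexPlace_im (a : CubicOrder ℤ) :
    (complexPlace a).im = rootIm * (a.y - (1 + realRoot) * a.z) := by
  simp only [complexPlace, lift, eq_intCast, complexRoot, neg_add_rev, pow_two, RingHom.coe_mk,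
    MonoidHom.coe_mk, OneHom.coe_mk, Complex.add_im, Complex.intCast_im, Complex.mul_im,
    Complex.intCast_re, zero_mul, add_zero, zero_add, Complex.mul_re]
  ring

theorem sq_norm_complexPlace (a : CubicOrder ℤ) :
    ‖complexPlace a‖ ^ 2 =
      (a.x + a.y * (-(1 + realRoot) / 2) + a.z * ((-(1 + realRoot) / 2) ^ 2 - rootIm ^ 2)) ^ 2
        + rootIm ^ 2 * (a.y - (1 + realRoot) * a.z) ^ 2 := by
  rw [← Complex.normSq_eq_norm_sq, Complex.normSq_apply, complexPlace_re, complexPlace_im]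
  ring

theorem realPlace_mul_sq_norm (a : CubicOrder ℤ) :
    realPlace a * ‖complexPlace a‖ ^ 2 = norm a := by
  obtain ⟨x, y, z⟩ := a
  rw [sq_norm_complexPlace, realPlace_apply, rootIm_sq, norm]
  push_cast
  linear_combination (y ^ 3 - y ^ 2 * z + 4 * y * z ^ 2 - 3 * x * y * z + 2 * x * z ^ 2
    + z ^ 3 * (realRoot ^ 3 + realRoot ^ 2 + 4 * realRoot + 2)) * realRoot_eq

theorem realPlace_pos {a : CubicOrder ℤ} (ha : 0 < norm a) : 0 < realPlace a := by
  have h : (0 : ℝ) < realPlace a * ‖complexPlace a‖ ^ 2 := by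
    rw [realPlace_mul_sq_norm]
    exact_mod_cast ha
  exact pos_of_mul_pos_left h (sq_nonneg _)

theorem realPlace_ne_zero {a : CubicOrder ℤ} (ha : a ≠ 0) : realPlace a ≠ 0 := by
  intro h
  have hN := realPlace_mul_sq_norm a
  rw [h, zero_mul] at hN
  exact ha (eq_zero_of_norm_eq_zero (by exact_mod_cast hN.symm))

/-! ### Reduced elements -/

/-- Half the square root of the absolute discriminant `484`. -/
theorem rootIm_mul_sq_add_sq :
    rootIm * ((realRoot - -(1 + realRoot) / 2) ^ 2 + rootIm ^ 2) = 11 := by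
  have hsq : (rootIm * ((realRoot - -(1 + realRoot) / 2) ^ 2 + rootIm ^ 2)) ^ 2 = 11 ^ 2 := by
    rw [mul_pow, rootIm_sq]
    linear_combination (27 / 4 * realRoot ^ 3 + 27 / 4 * realRoot ^ 2 + 27 * realRoot + 61 / 2)
      * realRoot_eq
  have := rootIm_pos
  exact (pow_left_inj₀ (by positivity) (by norm_num) two_ne_zero).mp hsq

/-- Minkowski's theorem for the sublattice `{β | n ∣ evalAt k β}`, of index `n`. The bound is
slightly more than `r²`, where the ball of radius `r` has volume `8 * 22`. -/
theorem exists_dvd_evalAt_and_lt {u : ℝ} (hu : 0 < u) {n : ℤ} (hn : 0 < n) (k : ℤ) :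
    ∃ β : CubicOrder ℤ, β ≠ 0 ∧ n ∣ evalAt k β ∧
      u ^ 2 * realPlace β ^ 2 + 2 / (u * n) * ‖complexPlace β‖ ^ 2 < 12.11 := by
  have : (0 : ℝ) < n := Int.cast_pos.mpr hn
  obtain ⟨s, hs⟩ : ∃ s : ℝ, s ^ 2 = 2 / (u * n) := ⟨_, Real.sq_sqrt (by positivity)⟩
  set t := realRoot with ht
  set b := rootIm with hb
  set c := -(1 + t) / 2 with hc
  let A : Matrix (Fin 3) (Fin 3) ℝ :=
    !![u * n, s * n, 0;
       u * (t - k), s * (c - k), s * b;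
       u * (t ^ 2 - k ^ 2), s * (c ^ 2 - b ^ 2 - k ^ 2), s * (2 * b * c)]
  have hdet : |A.det| = 22 := by
    have h22 : u * s ^ 2 * n * (b * ((t - c) ^ 2 + b ^ 2)) = 22 := by
      rw [rootIm_mul_sq_add_sq, hs]
      field_simp
      norm_num
    rw [← abs_of_pos (show (0 : ℝ) < 22 by norm_num), ← h22, Matrix.det_fin_three]
    simp only [A, Matrix.of_apply, Matrix.cons_val', Matrix.cons_val]
    congr 1
    ring
  obtain ⟨v, hv0, hv⟩ := exists_ne_zero_sum_vecMul_sq_lt (A := A) (r := 3.479)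
    (abs_pos.mp (by rw [hdet]; norm_num)) (by norm_num)
    (by rw [hdet]; nlinarith [Real.pi_gt_d2])
  refine ⟨⟨n * v 0 - k * v 1 - k ^ 2 * v 2, v 1, v 2⟩, fun h0 => hv0 ?_, ⟨v 0, ?_⟩, ?_⟩
  · simp only [CubicOrder.ext_iff, zero_x, zero_y, zero_z] at h0
    obtain ⟨hx, hy, hz⟩ := h0
    have hx : v 0 = 0 := by simpa [hy, hz, hn.ne'] using hx
    ext i
    fin_cases i <;> assumption
  · simp only [evalAt]
    ring
  · refine lt_of_eq_of_lt ?_ (hv.trans (by norm_num))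
    rw [← hs, realPlace_apply, sq_norm_complexPlace, ← ht, ← hb, ← hc]
    simp only [Int.cast_sub, Int.cast_mul, Int.cast_pow, Matrix.vecMul, dotProduct,
      Matrix.of_apply, Matrix.cons_val', Matrix.cons_val_fin_one, Fin.sum_univ_three,
      Matrix.cons_val_zero, Matrix.cons_val_one, Matrix.cons_val, mul_zero, zero_add, A]
    rw [show 1 + t = -2 * c by rw [hc]; ring]
    ring

theorem linear_dvd_mul_sq {κ β : CubicOrder ℤ} {p q d n k : ℤ} (hF : normForm p q = d * n ^ 2)
    (hk : normForm p q ∣ normForm k 1) (hlin : ∀ a, normForm p q ∣ evalAt k a → linear p q ∣ a)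
    (hκ : d ∣ evalAt k κ) (hβ : n ∣ evalAt k β) : linear p q ∣ κ * β ^ 2 := by
  refine hlin _ ?_
  have h1 : normForm p q ∣ evalAt k κ * evalAt k β ^ 2 :=
    hF ▸ mul_dvd_mul hκ (pow_dvd_pow_of_dvd hβ 2)
  have h2 := hk.trans (normForm_dvd_evalAt_mul_sub k κ (β ^ 2))
  have h3 := hk.trans (normForm_dvd_evalAt_mul_sub k β β)
  rw [← pow_two, ← pow_two] at h3
  refine (dvd_sub (dvd_sub h1 (h3.mul_left (evalAt k κ))) h2).trans (dvd_of_eq ?_)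
  ring

theorem isSquare_norm_of_mul_sq_eq {κ β P γ : CubicOrder ℤ} {d n : ℤ} (hd : d ≠ 0) (hn : n ≠ 0)
    (hκ : norm κ = d) (hP : norm P = d * n ^ 2) (h : κ * β ^ 2 = P * γ) : IsSquare (norm γ) := by
  have hN := congrArg norm h
  rw [pow_two, norm_mul, norm_mul, norm_mul, hκ, hP] at hN
  have hN' : norm β ^ 2 = n ^ 2 * norm γ := mul_left_cancel₀ hd (by linear_combination hN)
  obtain ⟨m, hm⟩ : n ∣ norm β := (Int.pow_dvd_pow_iff two_ne_zero).mp ⟨_, hN'⟩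
  exact ⟨m, mul_left_cancel₀ (pow_ne_zero 2 hn) (by rw [← hN', hm]; ring)⟩

/-- The elements of square norm that are positive at the real place and lie below the bound
provided by Minkowski's theorem. -/
structure IsReduced (γ : CubicOrder ℤ) : Prop where
  isSquare_norm : IsSquare (norm γ)
  realPlace_pos : 0 < realPlace γ
  lt : 25 / 49 * realPlace γ + 14 / 5 * ‖complexPlace γ‖ < 12.11

theorem isReduced_of_lt {κ β P γ : CubicOrder ℤ} {d n : ℤ} {σ : ℝ} (hd : 0 < d) (hn : 0 < n)
    (hκ : norm κ = d) (hP : norm P = d * n ^ 2) (hβ : β ≠ 0) (hγ : κ * β ^ 2 = P * γ) (hσ : 0 < σ)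
    (hσ2 : σ ^ 2 = realPlace P / realPlace κ)
    (hlt : (5 / (7 * σ)) ^ 2 * realPlace β ^ 2 +
      2 / (5 / (7 * σ) * n) * ‖complexPlace β‖ ^ 2 < 12.11) : IsReduced γ := by
  have hκ0 : 0 < realPlace κ := realPlace_pos (hκ ▸ hd)
  have hP0 : 0 < realPlace P := realPlace_pos (hP ▸ by positivity)
  have : (0 : ℝ) < n := Int.cast_pos.mpr hn
  have hR : realPlace κ * realPlace β ^ 2 = realPlace P * realPlace γ := by
    simpa only [map_mul, map_pow] using congrArg realPlace hγ
  have hC : ‖complexPlace κ‖ * ‖complexPlace β‖ ^ 2 = ‖complexPlace P‖ * ‖complexPlace γ‖ := by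
    simpa only [map_mul, map_pow, _root_.norm_mul, norm_pow] using congrArg (‖complexPlace ·‖) hγ
  have hκC := realPlace_mul_sq_norm κ
  have hPC := realPlace_mul_sq_norm P
  rw [hκ] at hκC
  rw [hP, Int.cast_mul, Int.cast_pow] at hPC
  have hκP : ‖complexPlace κ‖ * n = σ * ‖complexPlace P‖ := by
    refine (pow_left_inj₀ (by positivity) (by positivity) two_ne_zero).mp ?_
    rw [mul_pow, mul_pow, hσ2]
    field_simp
    linear_combination n ^ 2 * hκC - hPC
  have hPC0 : ‖complexPlace P‖ ≠ 0 := by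
    intro h0
    rw [h0] at hPC
    have : (0 : ℝ) < d * n ^ 2 := by positivity
    linarith
  refine ⟨isSquare_norm_of_mul_sq_eq hd.ne' hn.ne' hκ hP hγ, ?_, lt_of_eq_of_lt ?_ hlt⟩
  · have := realPlace_ne_zero hβ
    exact pos_of_mul_pos_right (hR ▸ by positivity) hP0.le
  · have hγR : realPlace γ = realPlace β ^ 2 / σ ^ 2 := by
      rw [hσ2]
      field_simp
      linear_combination -hR
    have hγC : ‖complexPlace γ‖ = σ / n * ‖complexPlace β‖ ^ 2 := by
      field_simp
      refine mul_left_cancel₀ hPC0 ?_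
      linear_combination ‖complexPlace β‖ ^ 2 * hκP - n * hC
    rw [hγR, hγC]
    field_simp
    ring

theorem exists_isReduced {κ : CubicOrder ℤ} {p q d n k₀ : ℤ} (hd : 0 < d) (hn : 0 < n)
    (h : IsCoprime p q) (hF : normForm p q = d * n ^ 2) (hκN : norm κ = d)
    (hk₀ : d ∣ p - q * k₀) (hκ : d ∣ evalAt k₀ κ) :
    ∃ β γ, κ * β ^ 2 = linear p q * γ ∧ IsReduced γ := by
  have hN : norm (linear p q) = d * n ^ 2 := (norm_linear p q).trans hF
  obtain ⟨k, hpk, hk, hlin⟩ := exists_residue h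
  have hκk : d ∣ evalAt k κ := by
    have hdF : d ∣ normForm p q := ⟨_, hF⟩
    have hdq : IsCoprime d q := ((isCoprime_normForm h).of_isCoprime_of_dvd_right hdF).symm
    have hkk : d ∣ k - k₀ := by
      refine hdq.dvd_of_dvd_mul_left ?_
      refine (dvd_sub hk₀ (hdF.trans hpk)).trans (dvd_of_eq ?_)
      ring
    refine (dvd_add hκ (hkk.mul_right (κ.y + κ.z * (k + k₀)))).trans (dvd_of_eq ?_)
    simp only [evalAt]
    ring
  have hκ0 : 0 < realPlace κ := realPlace_pos (hκN ▸ hd)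
  have hP0 : 0 < realPlace (linear p q) := realPlace_pos (hN ▸ by positivity)
  set σ := √(realPlace (linear p q) / realPlace κ)
  have hσ : 0 < σ := Real.sqrt_pos.mpr (by positivity)
  have hσ2 : σ ^ 2 = realPlace (linear p q) / realPlace κ := Real.sq_sqrt (by positivity)
  obtain ⟨β, hβ0, hβ, hlt⟩ := exists_dvd_evalAt_and_lt (u := 5 / (7 * σ)) (by positivity) hn k
  obtain ⟨γ, hγ⟩ := linear_dvd_mul_sq hF hk hlin hκk hβ
  exact ⟨β, γ, hγ, isReduced_of_lt hd hn hκN hN hβ0 hγ hσ hσ2 hlt⟩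

theorem IsReduced.realPlace_lt {γ : CubicOrder ℤ} (h : IsReduced γ) : realPlace γ < 23.736 := by
  linarith [h.lt, norm_nonneg (complexPlace γ)]

theorem IsReduced.norm_complexPlace_lt {γ : CubicOrder ℤ} (h : IsReduced γ) :
    ‖complexPlace γ‖ < 4.325 := by
  linarith [h.lt, h.realPlace_pos]

theorem IsReduced.abs_y_sub_lt {γ : CubicOrder ℤ} (h : IsReduced γ) :
    |γ.y - (1 + realRoot) * γ.z| < 2.135 := by
  have him := (Complex.abs_im_le_norm (complexPlace γ)).trans_lt h.norm_complexPlace_lt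
  have hroot : 2.026 < rootIm := by
    refine lt_of_pow_lt_pow_left₀ 2 rootIm_pos.le ?_
    rw [rootIm_sq]
    nlinarith [lt_realRoot]
  rw [complexPlace_im, abs_mul, abs_of_pos rootIm_pos] at him
  nlinarith [abs_nonneg (γ.y - (1 + realRoot) * γ.z : ℝ)]

theorem IsReduced.abs_z_le {γ : CubicOrder ℤ} (h : IsReduced γ) : |γ.z| ≤ 5 := by
  have hre := abs_lt.mp
    ((Complex.abs_re_le_norm (complexPlace γ)).trans_lt h.norm_complexPlace_lt)
  rw [complexPlace_re, rootIm_sq] at hre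
  obtain ⟨hI1, hI2⟩ := abs_lt.mp h.abs_y_sub_lt
  have hE := h.realPlace_lt
  have hE0 := h.realPlace_pos
  rw [realPlace_apply] at hE hE0
  have h1 := lt_realRoot
  have h2 := realRoot_lt
  have hz : |(γ.z : ℝ)| < 6 := by
    rw [abs_lt]
    constructor <;> nlinarith
  rw [← Int.lt_add_one_iff]
  exact_mod_cast hz

theorem IsReduced.abs_y_le {γ : CubicOrder ℤ} (h : IsReduced γ) : |γ.y| ≤ 9 := by
  obtain ⟨hI1, hI2⟩ := abs_lt.mp h.abs_y_sub_lt
  have hz : |(γ.z : ℝ)| ≤ 5 := by exact_mod_cast h.abs_z_le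
  rw [abs_le] at hz
  have h1 := lt_realRoot
  have h2 := realRoot_lt
  have hy : |(γ.y : ℝ)| < 10 := by
    rw [abs_lt]
    constructor <;> nlinarith
  rw [← Int.lt_add_one_iff]
  exact_mod_cast hy

/-- An approximation of `1000 * realPlace a`. -/
def approx (a : CubicOrder ℤ) : ℤ := 1000 * a.x + 433 * a.y + 187 * a.z

theorem IsReduced.abs_realPlace_sub_approx_lt {γ : CubicOrder ℤ} (h : IsReduced γ) :
    |1000 * realPlace γ - approx γ| < 5 := by
  have hy : |(γ.y : ℝ)| ≤ 9 := by exact_mod_cast h.abs_y_le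
  have hz : |(γ.z : ℝ)| ≤ 5 := by exact_mod_cast h.abs_z_le
  have hroot : |1000 * realRoot - 433| ≤ 0.2 := by
    rw [abs_le]
    constructor <;> linarith [lt_realRoot, realRoot_lt]
  have hroot2 : |1000 * realRoot ^ 2 - 187| ≤ 0.5 := by
    rw [abs_le]
    constructor <;> nlinarith [lt_realRoot, realRoot_lt]
  calc |1000 * realPlace γ - approx γ|
      = |γ.y * (1000 * realRoot - 433) + γ.z * (1000 * realRoot ^ 2 - 187)| := by
        rw [realPlace_apply, approx]
        push_cast
        ring_nf
    _ ≤ |(γ.y : ℝ)| * |1000 * realRoot - 433| + |(γ.z : ℝ)| * |1000 * realRoot ^ 2 - 187| := by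
        rw [← abs_mul, ← abs_mul]
        exact abs_add_le _ _
    _ ≤ 9 * 0.2 + 5 * 0.5 := by gcongr
    _ < 5 := by norm_num

theorem IsReduced.x_mem {γ : CubicOrder ℤ} (h : IsReduced γ) : γ.x ∈ Finset.Icc (-4) 28 := by
  obtain ⟨hG1, hG2⟩ := abs_lt.mp h.abs_realPlace_sub_approx_lt
  have hlt : approx γ < 23741 := by
    have : (approx γ : ℝ) < 23741 := by linarith [h.realPlace_lt]
    exact_mod_cast this
  have hgt : -5 < approx γ := by
    have : (-5 : ℝ) < approx γ := by linarith [h.realPlace_pos]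
    exact_mod_cast this
  have hy := abs_le.mp h.abs_y_le
  have hz := abs_le.mp h.abs_z_le
  rw [approx] at hlt hgt
  rw [Finset.mem_Icc]
  omega

theorem IsReduced.norm_mem {γ : CubicOrder ℤ} (h : IsReduced γ) :
    ∃ m ∈ Finset.Icc (1 : ℤ) 21, norm γ = m ^ 2 := by
  obtain ⟨m, hm⟩ := h.isSquare_norm
  have hN : norm γ = |m| ^ 2 := by rw [hm, sq_abs, pow_two]
  refine ⟨|m|, Finset.mem_Icc.mpr ⟨?_, ?_⟩, hN⟩
  · refine Int.one_le_abs fun h0 => h.realPlace_pos.ne' ?_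
    rw [eq_zero_of_norm_eq_zero (b := γ) (by rw [hm, h0, mul_zero]), map_zero]
  · have hlt : ((norm γ : ℤ) : ℝ) < 22 ^ 2 := by
      rw [← realPlace_mul_sq_norm]
      have := mul_lt_mul'' h.realPlace_lt (pow_lt_pow_left₀ h.norm_complexPlace_lt
        (norm_nonneg _) two_ne_zero) h.realPlace_pos.le (sq_nonneg _)
      exact this.trans (by norm_num)
    rw [hN] at hlt
    exact Int.lt_add_one_iff.mp (lt_of_pow_lt_pow_left₀ 2 (by norm_num) (by exact_mod_cast hlt))

/-- The inequality of `IsReduced` scaled by `49000`, with `norm γ` eliminating the complex place. -/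
theorem IsReduced.norm_le {γ : CubicOrder ℤ} (h : IsReduced γ) :
    4 * 49 ^ 3 * 10 ^ 9 * norm γ ≤ 25 * (approx γ + 5) * (593390 - 25 * (approx γ - 5)) ^ 2 := by
  have hE := h.realPlace_pos
  have hC : 49000 * 14 / 5 * ‖complexPlace γ‖ ≤ 593390 - 25 * (1000 * realPlace γ) := by
    linarith [h.lt]
  obtain ⟨hG1, hG2⟩ := abs_lt.mp h.abs_realPlace_sub_approx_lt
  have hle : (4 * 49 ^ 3 * 10 ^ 9 * norm γ : ℝ) ≤
      25 * (approx γ + 5) * (593390 - 25 * (approx γ - 5)) ^ 2 := by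
    calc (4 * 49 ^ 3 * 10 ^ 9 * norm γ : ℝ)
        = 25 * (1000 * realPlace γ) * (49000 * 14 / 5 * ‖complexPlace γ‖) ^ 2 := by
          rw [← realPlace_mul_sq_norm]
          ring
      _ ≤ 25 * (approx γ + 5) * (593390 - 25 * (approx γ - 5)) ^ 2 := by
          gcongr <;> linarith
  exact_mod_cast hle

/-- A list containing all elements that satisfy `IsReduced`. -/
def reducedList : List (CubicOrder ℤ) :=
  [⟨1, 0, 0⟩, ⟨1, -1, 0⟩, ⟨3, 1, 1⟩, ⟨6, 2, 1⟩, ⟨2, 1, 1⟩, ⟨4, 1, 1⟩, ⟨4, 0, 1⟩, ⟨11, 3, 2⟩]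

theorem mem_reducedList_of_le : ∀ x ∈ Finset.Icc (-4 : ℤ) 28, ∀ y ∈ Finset.Icc (-9 : ℤ) 9,
    ∀ z ∈ Finset.Icc (-5 : ℤ) 5, let γ : CubicOrder ℤ := ⟨x, y, z⟩
    4 * 49 ^ 3 * 10 ^ 9 * norm γ ≤ 25 * (approx γ + 5) * (593390 - 25 * (approx γ - 5)) ^ 2 →
      (∃ m ∈ Finset.Icc (1 : ℤ) 21, norm γ = m ^ 2) → γ ∈ reducedList := by
  decide +kernel

theorem IsReduced.mem_reducedList {γ : CubicOrder ℤ} (h : IsReduced γ) : γ ∈ reducedList :=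
  mem_reducedList_of_le γ.x h.x_mem γ.y (Finset.mem_Icc.mpr (abs_le.mp h.abs_y_le))
    γ.z (Finset.mem_Icc.mpr (abs_le.mp h.abs_z_le)) h.norm_le h.norm_mem

/-! ### The 2-descent -/

/-- Change of coefficients. -/
def map {R S : Type*} [CommRing R] [CommRing S] (f : R →+* S) : CubicOrder R →+* CubicOrder S where
  toFun a := ⟨f a.x, f a.y, f a.z⟩
  map_zero' := by ext <;> simp
  map_one' := by ext <;> simp
  map_add' a b := by ext <;> simp
  map_mul' a b := by ext <;> simp [map_ofNat f]

section Admissible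

/-- `h * b ^ 2` has the shape `p - qθ`, where `-(3 * p + q)` is `e` times a square. -/
def IsAdmissible {R : Type*} [CommRing R] (h : CubicOrder R) (e : R) (b : CubicOrder R) : Prop :=
  (h * (b * b)).z = 0 ∧ ∃ M, (h * (b * b)).y - 3 * (h * (b * b)).x = e * (M * M)

instance {R : Type*} [CommRing R] [Fintype R] [DecidableEq R] (h : CubicOrder R) (e : R)
    (b : CubicOrder R) : Decidable (IsAdmissible h e b) :=
  inferInstanceAs (Decidable (_ ∧ _))

theorem IsAdmissible.map {R S : Type*} [CommRing R] [CommRing S] {h b : CubicOrder R} {e : R}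
    (hb : IsAdmissible h e b) (f : R →+* S) :
    IsAdmissible (CubicOrder.map f h) (f e) (CubicOrder.map f b) := by
  obtain ⟨hz, M, hM⟩ := hb
  rw [IsAdmissible, ← map_mul, ← map_mul]
  refine ⟨(congrArg f hz).trans (map_zero f), f M, ?_⟩
  have hfM := congrArg f hM
  rw [map_sub, map_mul f 3, map_ofNat, map_mul f e, map_mul f M] at hfM
  exact hfM

theorem IsAdmissible.of_intCast_mul {h c : CubicOrder ℤ} {e l : ℤ} (hl : Prime l)
    (he : ¬ l ^ 2 ∣ e) (hb : IsAdmissible h e (l * c)) : IsAdmissible h e c := by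
  obtain ⟨hz, M, hM⟩ := hb
  have hl2 : l ^ 2 ≠ 0 := pow_ne_zero 2 hl.ne_zero
  have hsq : h * ((l * c) * (l * c)) = ((l ^ 2 : ℤ) : CubicOrder ℤ) * (h * (c * c)) := by
    push_cast
    ring
  rw [hsq] at hz hM
  simp only [mul_x (Int.cast _), mul_y (Int.cast _), mul_z (Int.cast _), intCast_x, intCast_y,
    intCast_z, zero_mul, mul_zero, add_zero, sub_zero, Int.cast_id] at hz hM
  have hlM : l ∣ M := by
    by_contra hlM
    have hcop : IsCoprime (l ^ 2) (M ^ 2) := (hl.coprime_iff_not_dvd.mpr hlM).pow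
    refine he (hcop.dvd_of_dvd_mul_right ⟨(h * (c * c)).y - 3 * (h * (c * c)).x, ?_⟩)
    linear_combination -hM
  obtain ⟨N, rfl⟩ := hlM
  exact ⟨(mul_eq_zero.mp hz).resolve_left hl2, N, mul_left_cancel₀ hl2 (by linear_combination hM)⟩

theorem IsAdmissible.eq_zero {h b : CubicOrder ℤ} {e : ℤ} {l r : ℕ} (hl : l.Prime) (hr : r ≠ 0)
    (he : ¬ (l : ℤ) ^ 2 ∣ e)
    (hloc : ∀ x y z : ZMod (l * r),
      IsAdmissible (CubicOrder.map (Int.castRingHom _) h) (e : ZMod (l * r)) ⟨x, y, z⟩ →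
        r * x = 0 ∧ r * y = 0 ∧ r * z = 0)
    (hb : IsAdmissible h e b) : b = 0 := by
  have hdvd {a : ℤ} (ha : (r : ZMod (l * r)) * (a : ZMod (l * r)) = 0) : (l : ℤ) ∣ a := by
    have ha' : ((r * a : ℤ) : ZMod (l * r)) = 0 := by
      push_cast
      exact ha
    rw [ZMod.intCast_zmod_eq_zero_iff_dvd, Nat.cast_mul, mul_comm (r : ℤ)] at ha'
    exact Int.dvd_of_mul_dvd_mul_right (Int.natCast_ne_zero.mpr hr) ha'
  refine eq_zero_of_descent (P := IsAdmissible h e) (l := l) (by exact_mod_cast hl.one_lt)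
    (fun b hb => ?_) b hb
  obtain ⟨hx, hy, hz⟩ := hloc _ _ _ (hb.map (Int.castRingHom (ZMod (l * r))))
  obtain ⟨x, hx⟩ := hdvd hx
  obtain ⟨y, hy⟩ := hdvd hy
  obtain ⟨z, hz⟩ := hdvd hz
  have hbc : b = (l : ℤ) * (⟨x, y, z⟩ : CubicOrder ℤ) := by ext <;> simp [hx, hy, hz]
  exact ⟨_, hbc, .of_intCast_mul (Nat.prime_iff_prime_int.mp hl) he (hbc ▸ hb)⟩

/-- Representatives `(h, e)` of the classes in which `p - qθ` can lie: `h * b ^ 2 = c * (p - qθ)`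
with `-c * (3 * p + q) = e * M ^ 2`. -/
def classList : List (CubicOrder ℤ × ℤ) :=
  [(1, 1), (⟨1, -1, -1⟩, 11), (⟨2, -1, 1⟩, 11), (⟨12, -29, 3⟩, 11), (⟨-1, 4, -1⟩, 66),
    (⟨7, -20, 9⟩, 33)]

theorem eq_one_of_mem_classList {h b : CubicOrder ℤ} {e : ℤ} (hmem : (h, e) ∈ classList)
    (hb0 : b ≠ 0) (hb : IsAdmissible h e b) : h = 1 ∧ e = 1 := by
  simp only [classList, List.mem_cons, List.not_mem_nil, or_false, Prod.mk.injEq] at hmem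
  obtain hgood | ⟨rfl, rfl⟩ | ⟨rfl, rfl⟩ | ⟨rfl, rfl⟩ | ⟨rfl, rfl⟩ | ⟨rfl, rfl⟩ := hmem
  · exact hgood
  all_goals refine absurd ?_ hb0
  · exact hb.eq_zero (l := 2) (r := 8) (by norm_num) (by norm_num) (by norm_num) (by decide +kernel)
  · exact hb.eq_zero (l := 2) (r := 2) (by norm_num) (by norm_num) (by norm_num) (by decide +kernel)
  · exact hb.eq_zero (l := 2) (r := 2) (by norm_num) (by norm_num) (by norm_num) (by decide +kernel)
  · exact hb.eq_zero (l := 3) (r := 3) (by norm_num) (by norm_num) (by norm_num) (by decide +kernel)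
  · exact hb.eq_zero (l := 3) (r := 3) (by norm_num) (by norm_num) (by norm_num) (by decide +kernel)

/-- If `κ * β ^ 2 = (p - qθ) * γ` and `-(3 * p + q)` is `d` times a square, then `p - qθ` lies in
one of the classes in `classList`. -/
def HasClass (κ : CubicOrder ℤ) (d : ℤ) (γ : CubicOrder ℤ) : Prop :=
  ∃ (h : CubicOrder ℤ) (e : ℤ) (μ : CubicOrder ℤ) (c s : ℤ), (h, e) ∈ classList ∧ c ≠ 0 ∧
    h * μ ^ 2 * γ = c * κ ∧ c * d = e * s ^ 2

theorem hasClass_eleven {γ : CubicOrder ℤ} (hγ : γ ∈ reducedList) : HasClass ⟨1, -1, -1⟩ 11 γ := by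
  simp only [reducedList, List.mem_cons, List.not_mem_nil, or_false] at hγ
  obtain rfl | rfl | rfl | rfl | rfl | rfl | rfl | rfl := hγ
  · exact ⟨⟨1, -1, -1⟩, 11, 1, 1, 1, by decide⟩
  · exact ⟨1, 1, ⟨4, 2, 3⟩, 44, 22, by decide⟩
  · exact ⟨1, 1, ⟨1, 6, -2⟩, 99, 33, by decide⟩
  · exact ⟨1, 1, ⟨-1, 5, 2⟩, 44, 22, by decide⟩
  · exact ⟨⟨12, -29, 3⟩, 11, ⟨14, 4, 3⟩, 16, 4, by decide⟩
  · exact ⟨⟨2, -1, 1⟩, 11, ⟨0, 1, 0⟩, 4, 2, by decide⟩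
  · exact ⟨⟨-1, 4, -1⟩, 66, 1, 6, 1, by decide⟩
  · exact ⟨⟨7, -20, 9⟩, 33, ⟨6, 2, 1⟩, 48, 4, by decide⟩

theorem hasClass_twentyTwo {γ : CubicOrder ℤ} (hγ : γ ∈ reducedList) :
    HasClass ⟨-5, 9, 6⟩ 22 γ := by
  simp only [reducedList, List.mem_cons, List.not_mem_nil, or_false] at hγ
  obtain rfl | rfl | rfl | rfl | rfl | rfl | rfl | rfl := hγ
  · exact ⟨1, 1, ⟨4, -9, 3⟩, 22, 22, by decide⟩
  · exact ⟨⟨1, -1, -1⟩, 11, ⟨0, 1, 0⟩, 2, 2, by decide⟩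
  · exact ⟨⟨1, -1, -1⟩, 11, ⟨2, -3, -1⟩, 18, 6, by decide⟩
  · exact ⟨⟨1, -1, -1⟩, 11, ⟨0, 1, -1⟩, 8, 4, by decide⟩
  · exact ⟨⟨2, -1, 1⟩, 11, ⟨0, 0, 1⟩, 8, 4, by decide⟩
  · exact ⟨⟨12, -29, 3⟩, 11, 1, 2, 2, by decide⟩
  · exact ⟨⟨7, -20, 9⟩, 33, 1, 6, 2, by decide⟩
  · exact ⟨⟨-1, 4, -1⟩, 66, ⟨0, 0, 1⟩, 12, 2, by decide⟩

theorem exists_sq_eq_intCast_mul {κ β γ : CubicOrder ℤ} {p q d m : ℤ} (hpq : IsCoprime p q)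
    (hκ : κ ≠ 0) (hγ : HasClass κ d γ) (hβ : κ * β ^ 2 = linear p q * γ)
    (hd : -(3 * p + q) = d * m ^ 2) :
    ∃ (b : CubicOrder ℤ) (c : ℤ), b ≠ 0 ∧ b * b = c * linear p q ∧ IsSquare (-(3 * p + q) * c) := by
  obtain ⟨h, e, μ, c, s, hmem, hc, hμ, hs⟩ := hγ
  have hb : h * ((μ * β) * (μ * β)) = (c : CubicOrder ℤ) * linear p q :=
    mul_left_cancel₀ hκ (by linear_combination h * μ ^ 2 * hβ + linear p q * hμ)
  have hb0 : μ * β ≠ 0 := by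
    intro h0
    rw [h0, mul_zero, mul_zero] at hb
    refine mul_ne_zero (fun hc0 => hc ?_) (linear_ne_zero hpq) hb.symm
    simpa using congrArg x hc0
  have hcd : -(3 * p + q) * c = e * (s * m * (s * m)) := by
    linear_combination c * hd + m ^ 2 * hs
  have hadm : IsAdmissible h e (μ * β) := by
    refine ⟨by simp [hb, linear], s * m, ?_⟩
    rw [hb]
    simp only [linear, mul_x, mul_y, intCast_x, intCast_y, intCast_z, Int.cast_id]
    linear_combination hcd
  obtain ⟨rfl, rfl⟩ := eq_one_of_mem_classList hmem hb0 hadm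
  rw [one_mul] at hb hcd
  exact ⟨μ * β, c, hb0, hb, s * m, hcd⟩

end Admissible

end CubicOrder

/-! ### Rational points of the elliptic curve -/

open CubicOrder (normForm)

theorem exists_squarefree_mul_sq {a b : ℤ} (ha : a ≠ 0) (h : IsSquare (a * b)) :
    ∃ d m n, Squarefree d ∧ a = d * m ^ 2 ∧ b = d * n ^ 2 := by
  obtain ⟨r, hr⟩ := h
  obtain ⟨c, m, hcm, hc⟩ := Nat.sq_mul_squarefree a.natAbs
  obtain ⟨d, hd, had⟩ : ∃ d : ℤ, Squarefree d ∧ a = d * m ^ 2 := by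
    refine ⟨a.sign * c, ?_, ?_⟩
    · rw [← Int.squarefree_natAbs, Int.natAbs_mul, Int.natAbs_sign_of_ne_zero ha, one_mul]
      exact hc
    · conv_lhs => rw [← Int.sign_mul_natAbs a, ← hcm]
      push_cast
      ring
  have hm : (m : ℤ) ≠ 0 := by
    rintro h0
    simp [had, h0] at ha
  obtain ⟨s, rfl⟩ : (m : ℤ) ∣ r :=
    (Int.pow_dvd_pow_iff two_ne_zero).mp ⟨d * b, by rw [pow_two, ← hr, had]; ring⟩
  have hs : d * b = s ^ 2 :=
    mul_left_cancel₀ (pow_ne_zero 2 hm) (by linear_combination hr - b * had)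
  obtain ⟨n, rfl⟩ : d ∣ s := (hd.dvd_pow_iff_dvd two_ne_zero).mp ⟨b, hs.symm⟩
  exact ⟨d, m, n, hd, had, mul_left_cancel₀ hd.ne_zero (by linear_combination hs)⟩

theorem exists_eq_mul_of_mul_eq_mul {a b p q : ℤ} (h : IsCoprime p q) (hab : a * q = b * p) :
    ∃ k, a = k * p ∧ b = k * q := by
  obtain ⟨r, s, hrs⟩ := h
  exact ⟨r * a + s * b, by linear_combination -a * hrs + s * hab,
    by linear_combination -b * hrs - r * hab⟩

/-- `p / q` is the `X`-coordinate of a rational point of `Y² = -(3X + 1)(X³ + X² + 4X - 2)` other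
than the Weierstrass point `X = -1/3`; in these coordinates the latter serves as the origin. -/
structure IsPoint (p q : ℤ) : Prop where
  isCoprime : IsCoprime p q
  ne_zero : 3 * p + q ≠ 0
  isSquare : IsSquare (-(3 * p + q) * normForm p q)

/-- Numerator of the `X`-coordinate of the double of a point. -/
def dupNum (p q : ℤ) : ℤ :=
  -5 * p ^ 4 - 12 * p ^ 3 * q - 38 * p ^ 2 * q ^ 2 + 4 * p * q ^ 3 + 3 * q ^ 4

/-- Denominator of the `X`-coordinate of the double of a point. -/
def dupDen (p q : ℤ) : ℤ :=
  -9 * p ^ 4 + 4 * p ^ 3 * q + 10 * p ^ 2 * q ^ 2 + 4 * p * q ^ 3 + 7 * q ^ 4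

theorem three_mul_dupNum_add_dupDen (p q : ℤ) :
    3 * dupNum p q + dupDen p q = -8 * (3 * p + q) * normForm p q := by
  simp only [dupNum, dupDen, normForm]
  ring

/-- `p / q` is the `X`-coordinate of the double of a rational point. -/
def IsDouble (p q : ℤ) : Prop :=
  ∃ p₁ q₁ k, IsPoint p₁ q₁ ∧ dupNum p₁ q₁ = k * p ∧ dupDen p₁ q₁ = k * q

theorem exists_isPoint {a b : ℤ} (h0 : 3 * a + b ≠ 0)
    (h : IsSquare (-(3 * a + b) * normForm a b)) :
    ∃ g p q, g ≠ 0 ∧ a = p * g ∧ b = q * g ∧ IsPoint p q := by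
  have hg : 0 < Int.gcd a b := by
    rw [Int.gcd_pos_iff]
    omega
  obtain ⟨g, p, q, hg0, hcop, rfl, rfl⟩ := Int.exists_gcd_one' hg
  have hg : (g : ℤ) ≠ 0 := by exact_mod_cast hg0.ne'
  obtain ⟨S, hS⟩ := h
  have hSg : (g ^ 2 : ℤ) ^ 2 * (-(3 * p + q) * normForm p q) = S ^ 2 := by
    rw [pow_two S, ← hS]
    simp only [normForm]
    ring
  obtain ⟨r, rfl⟩ : (g ^ 2 : ℤ) ∣ S := (Int.pow_dvd_pow_iff two_ne_zero).mp ⟨_, hSg.symm⟩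
  refine ⟨g, p, q, hg, rfl, rfl, Int.isCoprime_iff_gcd_eq_one.mpr hcop, ?_, r, ?_⟩
  · rintro hpq
    exact h0 (by linear_combination (g : ℤ) * hpq)
  · exact mul_left_cancel₀ (pow_ne_zero 2 (pow_ne_zero 2 hg)) (by linear_combination hSg)

theorem isDouble_of_dup_eq_mul {l₁ l₂ p q m : ℤ} (hpq : IsCoprime p q)
    (hl : 3 * l₁ + l₂ ≠ 0) (hN : dupNum l₁ l₂ = m * p) (hD : dupDen l₁ l₂ = m * q)
    (hS : IsSquare (-(3 * l₁ + l₂) * normForm l₁ l₂)) : IsDouble p q := by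
  obtain ⟨g, p₁, q₁, hg, rfl, rfl, h₁⟩ := exists_isPoint hl hS
  obtain ⟨k, hk⟩ : ∃ k, dupNum p₁ q₁ = k * p ∧ dupDen p₁ q₁ = k * q := by
    refine exists_eq_mul_of_mul_eq_mul hpq (mul_left_cancel₀ (pow_ne_zero 4 hg) ?_)
    simp only [dupNum, dupDen] at hN hD ⊢
    linear_combination q * hN - p * hD
  exact ⟨p₁, q₁, k, h₁, hk⟩

/-- A square root `x + yθ + zθ²` of `c(p - qθ)` determines a half of the point: its coordinate is
`(y + z) / (3z - y)`. -/
theorem isDouble_of_mul_self_eq {p q : ℤ} {b : CubicOrder ℤ} {c : ℤ} (hc : IsCoprime p q)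
    (h0 : 3 * p + q ≠ 0) (hb0 : b ≠ 0) (hb : b * b = c * CubicOrder.linear p q)
    (hM : IsSquare (-(3 * p + q) * c)) : IsDouble p q := by
  obtain ⟨x, y, z⟩ := b
  obtain ⟨M, hM⟩ := hM
  have hX := congrArg CubicOrder.x hb
  have hY := congrArg CubicOrder.y hb
  have hZ := congrArg CubicOrder.z hb
  simp only [CubicOrder.linear, CubicOrder.mul_x, CubicOrder.mul_y, CubicOrder.mul_z,
    CubicOrder.intCast_x, CubicOrder.intCast_y, CubicOrder.intCast_z, Int.cast_id, mul_zero,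
    zero_mul, add_zero, sub_zero] at hX hY hZ
  have hz : z ≠ 0 := by
    rintro rfl
    have hy : y = 0 := by
      simpa using hZ
    subst hy
    have hx : x = 0 := by nlinarith
    exact hb0 (by rw [hx]; rfl)
  have hl : 3 * (y + z) + (3 * z - y) ≠ 0 := by
    intro h
    have hy : y = -3 * z := by linarith
    subst hy
    have hx : x = -6 * z := mul_left_cancel₀ hz (by linarith)
    subst hx
    have hc0 : c = 0 := by
      have : c * (3 * p + q) = 0 := by linear_combination hY - 3 * hX
      simpa [h0] using this
    rw [hc0] at hX
    exact hz (by nlinarith)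
  refine isDouble_of_dup_eq_mul (m := -128 * z ^ 2 * c) hc hl ?_ ?_ ⟨4 * z * M, ?_⟩
  · simp only [dupNum]
    linear_combination -128 * z ^ 2 * hX + 32 * (2 * x * z + (3 * z - y) * (y + z)) * hZ
  · simp only [dupDen]
    linear_combination 128 * z ^ 2 * hY - 128 * y * z * hZ
  · simp only [normForm]
    linear_combination -48 * z ^ 2 * hX + 16 * z ^ 2 * hY +
      (12 * (2 * x * z + (3 * z - y) * (y + z)) - 16 * y * z) * hZ + 16 * z ^ 2 * hM

theorem normForm_ne_zero {p q : ℤ} (h : IsCoprime p q) : normForm p q ≠ 0 := by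
  rw [← CubicOrder.norm_linear]
  exact fun h0 => CubicOrder.linear_ne_zero h (CubicOrder.eq_zero_of_norm_eq_zero h0)

theorem eleven_dvd_of_isSquare {p q : ℤ} (h : IsSquare (-(3 * p + q) * normForm p q)) :
    11 ∣ p + 4 * q := by
  have hmod : ∀ p q r : ZMod 11,
      -(3 * p + q) * (p ^ 3 + p ^ 2 * q + 4 * p * q ^ 2 - 2 * q ^ 3) = r * r → p + 4 * q = 0 := by
    decide +kernel
  obtain ⟨r, hr⟩ := h
  have hr11 := congrArg (Int.cast : ℤ → ZMod 11) hr
  simp only [normForm] at hr11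
  push_cast at hr11
  refine (ZMod.intCast_zmod_eq_zero_iff_dvd _ 11).mp ?_
  push_cast
  exact hmod _ _ _ hr11

theorem normForm_eleven_mul_sub (u q : ℤ) : normForm (11 * u - 4 * q) q =
    11 * (11 * (11 * u ^ 3 - 11 * u ^ 2 * q + 4 * u * q ^ 2) - 6 * q ^ 3) := by
  simp only [normForm]
  ring

theorem not_sq_eleven_dvd_normForm {p q : ℤ} (h : IsCoprime p q) (h11 : 11 ∣ p + 4 * q) :
    ¬ 11 ^ 2 ∣ normForm p q := by
  obtain ⟨u, hu⟩ := h11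
  obtain rfl : p = 11 * u - 4 * q := by linear_combination hu
  have h11 : Prime (11 : ℤ) := by norm_num
  rw [normForm_eleven_mul_sub, pow_two, mul_dvd_mul_iff_left h11.ne_zero,
    dvd_sub_right (dvd_mul_right _ _)]
  intro hq
  have hq : 11 ∣ q := h11.dvd_of_dvd_pow ((h11.dvd_or_dvd hq).resolve_left (by norm_num))
  exact h11.not_isUnit (h.isUnit_of_dvd' (dvd_sub (dvd_mul_right _ _) (hq.mul_left 4)) hq)

theorem IsPoint.eq_eleven_or_eq_twentyTwo {p q d m n : ℤ} (h : IsPoint p q) (hd : Squarefree d)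
    (hd0 : 0 < d) (hm : -(3 * p + q) = d * m ^ 2) (hn : normForm p q = d * n ^ 2) :
    d = 11 ∨ d = 22 := by
  have h11 : Prime (11 : ℤ) := by norm_num
  have h11d : 11 ∣ d := by
    have hpq := eleven_dvd_of_isSquare h.isSquare
    by_contra hd11
    have hF : 11 ∣ d * n ^ 2 := by
      obtain ⟨u, hu⟩ := hpq
      obtain rfl : p = 11 * u - 4 * q := by linear_combination hu
      rw [← hn, normForm_eleven_mul_sub]
      exact dvd_mul_right _ _
    have hn11 : 11 ∣ n := h11.dvd_of_dvd_pow ((h11.dvd_or_dvd hF).resolve_left hd11)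
    exact not_sq_eleven_dvd_normForm h.isCoprime hpq
      (hn ▸ (pow_dvd_pow_of_dvd hn11 2).mul_left d)
  have hd88 : d ∣ 88 := by
    have hdt : d ∣ 3 * p + q := (dvd_neg.mp ⟨m ^ 2, hm⟩)
    have hcop : IsCoprime d (p ^ 3) := by
      obtain ⟨r, s, hrs⟩ := h.isCoprime
      have hpt : IsCoprime p (3 * p + q) := ⟨r - 3 * s, s, by linear_combination hrs⟩
      exact (hpt.of_isCoprime_of_dvd_right hdt).symm.pow_right
    refine hcop.dvd_of_dvd_mul_right ⟨n ^ 2 + m ^ 2 * (-29 * p ^ 2 + 10 * p * q - 2 * q ^ 2), ?_⟩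
    simp only [normForm] at hn
    linear_combination hn + (-29 * p ^ 2 + 10 * p * q - 2 * q ^ 2) * hm
  obtain ⟨c, rfl⟩ := h11d
  have hc : c ∣ 8 := Int.dvd_of_mul_dvd_mul_left (by norm_num) hd88
  have h4 : ¬ 4 ∣ c := fun h4 =>
    Int.prime_two.not_isUnit (hd 2 (Dvd.dvd.mul_left (h4 : 2 * 2 ∣ c) 11))
  have : c ≤ 8 := Int.le_of_dvd (by norm_num) hc
  have : 0 < c := by omega
  interval_cases c <;> omega

theorem exists_mul_sq_eq_linear_mul {p q d n : ℤ} (h : IsCoprime p q) (hd : d = 11 ∨ d = 22)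
    (hdt : d ∣ 3 * p + q) (hF : normForm p q = d * n ^ 2) (hn : n ≠ 0) :
    ∃ κ β γ, κ ≠ 0 ∧ CubicOrder.HasClass κ d γ ∧ κ * β ^ 2 = CubicOrder.linear p q * γ := by
  have hk₀ : d ∣ p - q * 7 := by
    refine (dvd_sub (Dvd.dvd.mul_right (?_ : d ∣ 22) p) (hdt.mul_left 7)).trans (dvd_of_eq ?_)
    · obtain rfl | rfl := hd <;> norm_num
    · ring
  rw [← sq_abs n] at hF
  obtain rfl | rfl := hd
  · obtain ⟨β, γ, hβ, hγ⟩ := CubicOrder.exists_isReduced (κ := ⟨1, -1, -1⟩) (by norm_num)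
      (abs_pos.mpr hn) h hF (by decide) hk₀ (by decide)
    exact ⟨_, β, γ, by decide, CubicOrder.hasClass_eleven hγ.mem_reducedList, hβ⟩
  · obtain ⟨β, γ, hβ, hγ⟩ := CubicOrder.exists_isReduced (κ := ⟨-5, 9, 6⟩) (by norm_num)
      (abs_pos.mpr hn) h hF (by decide) hk₀ (by decide)
    exact ⟨_, β, γ, by decide, CubicOrder.hasClass_twentyTwo hγ.mem_reducedList, hβ⟩

theorem IsPoint.isDouble_of_pos {p q : ℤ} (h : IsPoint p q) (hF : 0 < normForm p q) :
    IsDouble p q := by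
  obtain ⟨d, m, n, hd, hm, hn⟩ := exists_squarefree_mul_sq (neg_ne_zero.mpr h.ne_zero) h.isSquare
  have hd0 : 0 < d := pos_of_mul_pos_left (hn ▸ hF) (sq_nonneg n)
  have hn0 : n ≠ 0 := by
    rintro rfl
    simp [hn] at hF
  obtain ⟨κ, β, γ, hκ, hγ, hβ⟩ := exists_mul_sq_eq_linear_mul h.isCoprime
    (h.eq_eleven_or_eq_twentyTwo hd hd0 hm hn) (dvd_neg.mp ⟨m ^ 2, hm⟩) hn hn0
  obtain ⟨b, c, hb0, hb, hM⟩ := CubicOrder.exists_sq_eq_intCast_mul h.isCoprime hκ hγ hβ hm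
  exact isDouble_of_mul_self_eq h.isCoprime h.ne_zero hb0 hb hM

theorem IsPoint.isDouble {p q : ℤ} (h : IsPoint p q) : IsDouble p q := by
  obtain hF | hF := lt_or_gt_of_ne (normForm_ne_zero h.isCoprime)
  · have hneg : normForm (-p) (-q) = -normForm p q := by
      simp only [normForm]
      ring
    have hpt : IsPoint (-p) (-q) := by
      refine ⟨h.isCoprime.neg_neg, fun h0 => h.ne_zero (by linarith), ?_⟩
      rw [hneg, mul_neg, ← neg_mul]
      convert h.isSquare using 2
      ring
    obtain ⟨p₁, q₁, k, h₁, hN, hD⟩ := hpt.isDouble_of_pos (by omega)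
    exact ⟨p₁, q₁, -k, h₁, by rw [hN]; ring, by rw [hD]; ring⟩
  · exact h.isDouble_of_pos hF

theorem dvd_of_dvd_mul_of_dvd_mul {k m p q : ℤ} (h : IsCoprime p q) (hp : m ∣ k * p)
    (hq : m ∣ k * q) : m ∣ k := by
  obtain ⟨r, s, hrs⟩ := h
  refine (dvd_add (hp.mul_left r) (hq.mul_left s)).trans (dvd_of_eq ?_)
  linear_combination k * hrs

section TwoAdic

variable {p q p₁ q₁ k : ℤ}

theorem mul_three_mul_add_eq_of_dup_eq (hN : dupNum p₁ q₁ = k * p) (hD : dupDen p₁ q₁ = k * q) :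
    k * (3 * p + q) = -8 * (3 * p₁ + q₁) * normForm p₁ q₁ := by
  linear_combination three_mul_dupNum_add_dupDen p₁ q₁ - 3 * hN - hD

theorem eight_dvd_of_dup_eq (hN : dupNum p₁ q₁ = k * p) (hD : dupDen p₁ q₁ = k * q)
    (h : Odd (3 * p₁ + q₁)) : 8 ∣ 3 * p + q := by
  have hk : Odd (k * p) := by
    have hkp : k * p = (3 * p₁ + q₁) ^ 4 + 2 * (-43 * p₁ ^ 4 - 60 * p₁ ^ 3 * q₁ -
        46 * p₁ ^ 2 * q₁ ^ 2 - 4 * p₁ * q₁ ^ 3 + q₁ ^ 4) := by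
      rw [← hN, dupNum]
      ring
    exact hkp ▸ h.pow.add_even (even_two_mul _)
  have hk : ¬ 2 ∣ k := Int.two_dvd_ne_zero.mpr (Int.odd_iff.mp (Int.odd_mul.mp hk).1)
  refine Int.prime_two.pow_dvd_of_dvd_mul_left 3 hk ?_
  rw [mul_three_mul_add_eq_of_dup_eq hN hD]
  exact ⟨-((3 * p₁ + q₁) * normForm p₁ q₁), by ring⟩

theorem two_pow_succ_dvd_of_dup_eq (hpq : IsCoprime p q) (h₁ : IsCoprime p₁ q₁)
    (hN : dupNum p₁ q₁ = k * p) (hD : dupDen p₁ q₁ = k * q) {n : ℕ} (hn : 2 ≤ n)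
    (h : 2 ^ n ∣ 3 * p₁ + q₁) : 2 ^ (n + 1) ∣ 3 * p + q := by
  obtain ⟨c, hc⟩ : 4 ∣ 3 * p₁ + q₁ := (pow_dvd_pow 2 hn).trans h
  obtain ⟨s, rfl⟩ : ∃ s, q₁ = p₁ + 4 * s := ⟨c - p₁, by linear_combination hc⟩
  have hp₁ : Odd p₁ := by
    rw [← Int.not_even_iff_odd, even_iff_two_dvd]
    exact fun h2 => Int.prime_two.not_isUnit (h₁.isUnit_of_dvd' h2 (by omega))
  have hT := mul_three_mul_add_eq_of_dup_eq hN hD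
  simp only [dupNum, dupDen, normForm] at hN hD hT
  obtain ⟨l, rfl⟩ : 16 ∣ k := by
    refine dvd_of_dvd_mul_of_dvd_mul hpq (hN ▸ ?_) (hD ▸ ?_)
    · exact ⟨-3 * p₁ ^ 4 - 16 * p₁ ^ 3 * s - 8 * p₁ ^ 2 * s ^ 2 + 64 * p₁ * s ^ 3 + 48 * s ^ 4,
        by ring⟩
    · exact ⟨p₁ ^ 4 + 16 * p₁ ^ 3 * s + 64 * p₁ ^ 2 * s ^ 2 + 128 * p₁ * s ^ 3 + 112 * s ^ 4,
        by ring⟩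
  have hl : Odd (l * p) := by
    have hlp : l * p = -3 * p₁ ^ 4 + 2 *
        (-8 * p₁ ^ 3 * s - 4 * p₁ ^ 2 * s ^ 2 + 32 * p₁ * s ^ 3 + 24 * s ^ 4) := by
      linarith
    exact hlp ▸ ((by decide : Odd (-3 : ℤ)).mul hp₁.pow).add_even (even_two_mul _)
  have hl : ¬ 2 ∣ l := Int.two_dvd_ne_zero.mpr (Int.odd_iff.mp (Int.odd_mul.mp hl).1)
  refine Int.prime_two.pow_dvd_of_dvd_mul_left (n + 1) hl ?_
  obtain ⟨e, he⟩ := h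
  refine ⟨-e * (p₁ ^ 3 + 3 * p₁ ^ 2 * s - 8 * p₁ * s ^ 2 - 32 * s ^ 3), ?_⟩
  refine mul_left_cancel₀ (by norm_num : (16 : ℤ) ≠ 0) ?_
  linear_combination hT -
    32 * (p₁ ^ 3 + 3 * p₁ ^ 2 * s - 8 * p₁ * s ^ 2 - 32 * s ^ 3) * he

theorem odd_of_dup_eq (hpq : IsCoprime p q) (h₁ : IsCoprime p₁ q₁)
    (hN : dupNum p₁ q₁ = k * p) (hD : dupDen p₁ q₁ = k * q)
    (h : (3 * p₁ + q₁) % 4 = 2) : Odd (3 * p + q) := by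
  have hp₁ : Odd p₁ := by
    rw [← Int.not_even_iff_odd, even_iff_two_dvd]
    exact fun h2 => Int.prime_two.not_isUnit (h₁.isUnit_of_dvd' h2 (by omega))
  obtain ⟨s, rfl⟩ : ∃ s, q₁ = -p₁ + 4 * s := by
    obtain ⟨r, rfl⟩ := hp₁
    exact ⟨(2 * r + 1 + q₁) / 4, by omega⟩
  have hT := mul_three_mul_add_eq_of_dup_eq hN hD
  simp only [dupNum, dupDen, normForm] at hN hD hT
  obtain ⟨l, rfl⟩ : 32 ∣ k := by
    refine dvd_of_dvd_mul_of_dvd_mul hpq (hN ▸ ?_) (hD ▸ ?_)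
    · exact ⟨-p₁ ^ 4 + 8 * p₁ ^ 3 * s - 16 * p₁ ^ 2 * s ^ 2 - 16 * p₁ * s ^ 3 + 24 * s ^ 4,
        by ring⟩
    · exact ⟨-4 * p₁ ^ 3 * s + 20 * p₁ ^ 2 * s ^ 2 - 48 * p₁ * s ^ 3 + 56 * s ^ 4, by ring⟩
  have hl : l * (3 * p + q) = -((p₁ + 2 * s) *
      (3 * p₁ ^ 3 + 2 * (-13 * p₁ ^ 2 * s + 40 * p₁ * s ^ 2 - 32 * s ^ 3))) := by
    linarith
  refine (Int.odd_mul.mp (hl ▸ Odd.neg ?_)).2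
  exact (hp₁.add_even (even_two_mul _)).mul
    (((by decide : Odd (3 : ℤ)).mul hp₁.pow).add_even (even_two_mul _))

end TwoAdic

theorem IsPoint.four_dvd {p q : ℤ} (h : IsPoint p q) : 4 ∣ 3 * p + q := by
  obtain ⟨p₁, q₁, k, h₁, hN, hD⟩ := h.isDouble
  obtain ⟨p₂, q₂, k₁, h₂, hN₁, hD₁⟩ := h₁.isDouble
  have : (3 * p₂ + q₂) % 4 = 2 ∨ 4 ∣ 3 * p₂ + q₂ ∨ Odd (3 * p₂ + q₂) := by
    rw [Int.odd_iff]
    omega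
  have hmod : 4 ∣ 3 * p₁ + q₁ ∨ Odd (3 * p₁ + q₁) := by
    obtain h' | h' | h' := this
    · exact .inr (odd_of_dup_eq h₁.isCoprime h₂.isCoprime hN₁ hD₁ h')
    · exact .inl (.trans (by norm_num)
        (two_pow_succ_dvd_of_dup_eq h₁.isCoprime h₂.isCoprime hN₁ hD₁ (n := 2) le_rfl h'))
    · exact .inl (.trans (by norm_num) (eight_dvd_of_dup_eq hN₁ hD₁ h'))
  obtain h' | h' := hmod
  · exact .trans (by norm_num)
      (two_pow_succ_dvd_of_dup_eq h.isCoprime h₁.isCoprime hN hD (n := 2) le_rfl h')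
  · exact .trans (by norm_num) (eight_dvd_of_dup_eq hN hD h')

theorem not_isPoint (p q : ℤ) : ¬ IsPoint p q := by
  have key : ∀ n : ℕ, ∀ p q, IsPoint p q → (2 : ℤ) ^ (n + 2) ∣ 3 * p + q := by
    intro n
    induction n with
    | zero => exact fun p q h => h.four_dvd
    | succ n ih =>
      intro p q h
      obtain ⟨p₁, q₁, k, h₁, hN, hD⟩ := h.isDouble
      exact two_pow_succ_dvd_of_dup_eq h.isCoprime h₁.isCoprime hN hD (by omega) (ih _ _ h₁)
  intro h
  refine h.ne_zero (Int.eq_zero_of_dvd_of_natAbs_lt_natAbs (key (3 * p + q).natAbs p q h) ?_)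
  rw [Int.natAbs_pow]
  exact Nat.lt_two_pow_self.trans_le (Nat.pow_le_pow_right two_pos (by omega))

/-! ### Rational points of the genus 2 curve -/

theorem sq_ne_neg_branch_cubic (X t : ℚ) : t ^ 2 ≠ -(4 * X ^ 3 + 7 * X ^ 2 - 6 * X + 19) := by
  intro h
  have hX : X * X.den = X.num := Rat.mul_den_eq_num X
  have h22 : 3 * (7 * X.den + X.num) + (X.den - 3 * X.num) = 22 * (X.den : ℤ) := by ring
  have hS : IsSquare (-(3 * (7 * X.den + X.num) + (X.den - 3 * X.num)) *
      normForm (7 * X.den + X.num) (X.den - 3 * X.num)) := by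
    rw [← Rat.isSquare_intCast_iff]
    refine ⟨t * (22 * X.den ^ 2), ?_⟩
    simp only [normForm]
    push_cast
    rw [← hX]
    linear_combination (-484 * (X.den : ℚ) ^ 4) * h
  obtain ⟨-, p, q, -, -, -, hpq⟩ := exists_isPoint (by rw [h22]; simp) hS
  exact not_isPoint p q hpq

/-- The binary form of `4X³ - 4X² - 28X + 41`, which is the square of `2Y + 1` on
`Y² + Y = X³ - X² - 7X + 10`. -/
def weierstrassForm (a b : ℤ) : ℤ := 4 * a ^ 3 - 4 * a ^ 2 * b - 28 * a * b ^ 2 + 41 * b ^ 3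

/-- The binary form of `4X³ + 7X² - 6X + 19`, whose roots are the branch points of the double cover
`X_ns(11) → X_ns⁺(11)`. -/
def branchForm (a b : ℤ) : ℤ := 4 * a ^ 3 + 7 * a ^ 2 * b - 6 * a * b ^ 2 + 19 * b ^ 3

theorem weierstrassForm_bezout (a b : ℤ) :
    (-16 * a ^ 2 + 40 * a * b - 25 * b ^ 2) * weierstrassForm a b +
      (16 * a ^ 2 - 84 * a * b + 124 * b ^ 2) * branchForm a b = 1331 * b ^ 5 := by
  simp only [weierstrassForm, branchForm]
  ring

theorem weierstrassForm_bezout' (a b : ℤ) :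
    (26619 * b ^ 2 - 17374 * a * b + 15831 * a ^ 2) * weierstrassForm a b +
      (-57441 * b ^ 2 + 58580 * a * b - 14500 * a ^ 2) * branchForm a b = 5324 * a ^ 5 := by
  simp only [weierstrassForm, branchForm]
  ring

section Genus2

variable {a b : ℤ}

theorem eleven_dvd_sub_of_isSquare (h : IsSquare (branchForm a b * -weierstrassForm a b)) :
    11 ∣ a - 4 * b := by
  have hmod : ∀ a b r : ZMod 11, (4 * a ^ 3 + 7 * a ^ 2 * b - 6 * a * b ^ 2 + 19 * b ^ 3) *
      -(4 * a ^ 3 - 4 * a ^ 2 * b - 28 * a * b ^ 2 + 41 * b ^ 3) = r * r → a - 4 * b = 0 := by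
    decide +kernel
  obtain ⟨r, hr⟩ := h
  have hr11 := congrArg (Int.cast : ℤ → ZMod 11) hr
  simp only [weierstrassForm, branchForm] at hr11
  push_cast at hr11
  refine (ZMod.intCast_zmod_eq_zero_iff_dvd _ 11).mp ?_
  push_cast
  exact hmod _ _ _ hr11

theorem not_eleven_dvd_of_branchForm_eq {d n : ℤ} (h : IsCoprime a b) (hab : 11 ∣ a - 4 * b)
    (hd : Squarefree d) (hn : branchForm a b = d * n ^ 2) : ¬ 11 ∣ d := by
  have h11 : Prime (11 : ℤ) := by norm_num
  obtain ⟨s, hs⟩ := hab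
  obtain rfl : a = 4 * b + 11 * s := by linear_combination hs
  rintro ⟨e, rfl⟩
  have hen : e * n ^ 2 =
      11 * (3 * b ^ 3 + 11 * (2 * s * b ^ 2 + 5 * s ^ 2 * b + 4 * s ^ 3)) := by
    simp only [branchForm] at hn
    linarith
  have he : ¬ 11 ∣ e := fun he => h11.not_isUnit (hd 11 (mul_dvd_mul_left 11 he))
  obtain ⟨t, rfl⟩ : 11 ∣ n :=
    h11.dvd_of_dvd_pow ((h11.dvd_or_dvd (Dvd.intro _ hen.symm)).resolve_left he)
  have hb : 11 ∣ 3 * b ^ 3 :=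
    ⟨e * t ^ 2 - (2 * s * b ^ 2 + 5 * s ^ 2 * b + 4 * s ^ 3), by linarith⟩
  have hb : 11 ∣ b := h11.dvd_of_dvd_pow ((h11.dvd_or_dvd hb).resolve_left (by norm_num))
  exact h11.not_isUnit (h.isUnit_of_dvd' (dvd_add (hb.mul_left 4) (dvd_mul_right _ _)) hb)

theorem eq_one_or_eq_two_of_branchForm_eq {d m n : ℤ} (h : IsCoprime a b) (hd : Squarefree d)
    (hd0 : 0 < d) (hm : branchForm a b = d * m ^ 2) (hn : -weierstrassForm a b = d * n ^ 2) :
    d = 1 ∨ d = 2 := by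
  have hdB : d ∣ branchForm a b := ⟨_, hm⟩
  have hdA : d ∣ weierstrassForm a b := dvd_neg.mp ⟨_, hn⟩
  have hd5324 : d ∣ 11 ^ 3 * 4 := by
    refine dvd_of_dvd_mul_of_dvd_mul (h.pow (m := 5) (n := 5)) ?_ ?_
    · exact (dvd_add (hdA.mul_left _) (hdB.mul_left _)).trans
        (dvd_of_eq (weierstrassForm_bezout' a b))
    · refine ((dvd_add (hdA.mul_left _) (hdB.mul_left _)).trans
        (dvd_of_eq (weierstrassForm_bezout a b))).trans ⟨4, ?_⟩
      ring
  have hd11 : ¬ 11 ∣ d :=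
    not_eleven_dvd_of_branchForm_eq h
      (eleven_dvd_sub_of_isSquare ⟨d * m * n, by rw [hm, hn]; ring⟩) hd hm
  have h11 : Prime (11 : ℤ) := by norm_num
  have hd4 : d ∣ 4 :=
    ((h11.coprime_iff_not_dvd.mpr hd11).symm.pow_right).dvd_of_dvd_mul_left hd5324
  have h4 : ¬ 2 * 2 ∣ d := fun h4 => Int.prime_two.not_isUnit (hd 2 h4)
  have : d ≤ 4 := Int.le_of_dvd (by norm_num) hd4
  interval_cases d <;> omega

theorem emod_four_eq_one_of_isSquare_neg_one {c : ℕ} (hc : Odd c) (h : IsSquare (-1 : ZMod c)) :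
    c % 4 = 1 := by
  obtain ⟨x, y, rfl⟩ := Nat.eq_sq_add_sq_of_isSquare_mod_neg_one h
  have hmod : ∀ x y : ZMod 4, x ^ 2 + y ^ 2 ≠ 3 := by decide
  have h3 : (x ^ 2 + y ^ 2) % 4 ≠ 3 := by
    intro h3
    refine hmod x y ?_
    exact_mod_cast (ZMod.natCast_eq_natCast_iff' _ 3 4).mpr h3
  have := Nat.odd_iff.mp hc
  omega

/-- Modulo a divisor of `b`, the product of the two forms is `-(4a³)²`. -/
theorem emod_four_eq_one_of_dvd_of_isSquare (h : IsCoprime a b)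
    (hr : IsSquare (branchForm a b * -weierstrassForm a b)) {c : ℤ} (hc : 0 < c) (hodd : Odd c)
    (hcb : c ∣ b) : c % 4 = 1 := by
  lift c to ℕ using hc.le
  rw [Int.odd_coe_nat] at hodd
  obtain ⟨r, hr⟩ := hr
  obtain ⟨α, β, hαβ⟩ : IsCoprime (2 ^ 2 * a ^ 3) (c : ℤ) :=
    .mul_left (Nat.isCoprime_iff_coprime.mpr (Nat.coprime_two_left.mpr hodd)).pow_left
      (h.of_isCoprime_of_dvd_right hcb).pow_left
  have hb : (b : ZMod c) = 0 := (ZMod.intCast_zmod_eq_zero_iff_dvd b c).mpr hcb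
  have hα : (α : ZMod c) * (4 * a ^ 3) = 1 := by
    have := congrArg (Int.cast : ℤ → ZMod c) hαβ
    push_cast at this
    rw [ZMod.natCast_self, mul_zero, add_zero] at this
    linear_combination this
  have hrc := congrArg (Int.cast : ℤ → ZMod c) hr
  simp only [branchForm, weierstrassForm] at hrc
  push_cast at hrc
  rw [hb] at hrc
  have : c % 4 = 1 := emod_four_eq_one_of_isSquare_neg_one hodd ⟨α * r, by
    linear_combination (α : ZMod c) ^ 2 * hrc + (α * (4 * a ^ 3) + 1 : ZMod c) * hα⟩
  omega

theorem even_of_neg_weierstrassForm_eq {d n : ℤ} (hd : d = 1 ∨ d = 2)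
    (hn : -weierstrassForm a b = d * n ^ 2) (hb : Odd b → b % 4 = 1) : Even b := by
  by_contra hodd
  have hmod : ∀ a d n : ZMod 4, d = 1 ∨ d = 2 →
      -(4 * a ^ 3 - 4 * a ^ 2 * 1 - 28 * a * 1 ^ 2 + 41 * 1 ^ 3) ≠ d * n ^ 2 := by decide +kernel
  have hb1 : (b : ZMod 4) = 1 :=
    mod_cast (ZMod.intCast_eq_intCast_iff' b 1 4).mpr (hb (Int.not_even_iff_odd.mp hodd))
  have hn4 := congrArg (Int.cast : ℤ → ZMod 4) hn
  simp only [weierstrassForm] at hn4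
  push_cast at hn4
  rw [hb1] at hn4
  exact hmod a d n (by rcases hd with rfl | rfl <;> simp) hn4

theorem eq_one_and_four_dvd_of_branchForm_eq {d m n : ℤ} (ha : Odd a) (hb : Even b)
    (hd : d = 1 ∨ d = 2) (hm : branchForm a b = d * m ^ 2) (hn : -weierstrassForm a b = d * n ^ 2) :
    d = 1 ∧ 4 ∣ b := by
  obtain ⟨k, rfl⟩ := ha
  obtain ⟨l, rfl⟩ := hb.two_dvd
  simp only [weierstrassForm, branchForm] at hm hn
  obtain rfl : d = 1 := by
    refine hd.resolve_right ?_
    rintro rfl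
    have hmod : ∀ k l n : ZMod 8, -(4 * (2 * k + 1) ^ 3 - 4 * (2 * k + 1) ^ 2 * (2 * l) -
        28 * (2 * k + 1) * (2 * l) ^ 2 + 41 * (2 * l) ^ 3) ≠ 2 * n ^ 2 := by decide +kernel
    have hn8 := congrArg (Int.cast : ℤ → ZMod 8) hn
    push_cast at hn8
    exact hmod k l n hn8
  have hmod : ∀ k l m : ZMod 4, 4 * (2 * k + 1) ^ 3 + 7 * (2 * k + 1) ^ 2 * (2 * l) -
      6 * (2 * k + 1) * (2 * l) ^ 2 + 19 * (2 * l) ^ 3 = 1 * m ^ 2 → 2 * l = 0 := by decide +kernel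
  have hm4 := congrArg (Int.cast : ℤ → ZMod 4) hm
  push_cast at hm4
  refine ⟨rfl, (ZMod.intCast_zmod_eq_zero_iff_dvd _ 4).mp ?_⟩
  push_cast
  exact hmod k l m hm4

theorem emod_eight_of_branchForm_eq_sq {m n : ℤ} (ha : Odd a) (hm : branchForm a (4 * b) = m ^ 2)
    (hn : -weierstrassForm a (4 * b) = n ^ 2) : b % 8 = 3 ∨ b % 8 = 6 ∨ b % 8 = 7 := by
  obtain ⟨k, rfl⟩ := ha
  simp only [weierstrassForm, branchForm] at hm hn
  obtain ⟨m, rfl⟩ : 2 ∣ m := Int.prime_two.dvd_of_dvd_pow (n := 2)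
    ⟨2 * ((2 * k + 1) ^ 3 + 7 * (2 * k + 1) ^ 2 * b - 24 * (2 * k + 1) * b ^ 2 + 304 * b ^ 3),
      by linear_combination -hm⟩
  obtain ⟨n, rfl⟩ : 2 ∣ n := Int.prime_two.dvd_of_dvd_pow (n := 2)
    ⟨-2 * ((2 * k + 1) ^ 3 - 4 * (2 * k + 1) ^ 2 * b - 112 * (2 * k + 1) * b ^ 2 + 656 * b ^ 3),
      by linear_combination -hn⟩
  have hm' : (2 * k + 1) ^ 3 + 7 * (2 * k + 1) ^ 2 * b - 24 * (2 * k + 1) * b ^ 2 +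
      304 * b ^ 3 = m ^ 2 := by linarith
  have hn' : -((2 * k + 1) ^ 3 - 4 * (2 * k + 1) ^ 2 * b - 112 * (2 * k + 1) * b ^ 2 +
      656 * b ^ 3) = n ^ 2 := by linarith
  have hmod : ∀ k b m n : ZMod 8,
      (2 * k + 1) ^ 3 + 7 * (2 * k + 1) ^ 2 * b - 24 * (2 * k + 1) * b ^ 2 + 304 * b ^ 3 = m ^ 2 →
      -((2 * k + 1) ^ 3 - 4 * (2 * k + 1) ^ 2 * b - 112 * (2 * k + 1) * b ^ 2 + 656 * b ^ 3) =
        n ^ 2 → b = 3 ∨ b = 6 ∨ b = 7 := by decide +kernel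
  have hm8 := congrArg (Int.cast : ℤ → ZMod 8) hm'
  have hn8 := congrArg (Int.cast : ℤ → ZMod 8) hn'
  push_cast at hm8 hn8
  rcases hmod k b m n hm8 hn8 with h | h | h
  · exact .inl ((ZMod.intCast_eq_intCast_iff' b 3 8).mp (mod_cast h))
  · exact .inr (.inl ((ZMod.intCast_eq_intCast_iff' b 6 8).mp (mod_cast h)))
  · exact .inr (.inr ((ZMod.intCast_eq_intCast_iff' b 7 8).mp (mod_cast h)))

theorem not_isSquare_branchForm_mul (h : IsCoprime a b) (hb : 0 < b) (hB : 0 < branchForm a b) :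
    ¬ IsSquare (branchForm a b * -weierstrassForm a b) := by
  intro hr
  have hodd : ∀ c : ℤ, c ∣ b → 0 < c → Odd c → c % 4 = 1 := fun c hcb hc hc2 =>
    emod_four_eq_one_of_dvd_of_isSquare h hr hc hc2 hcb
  obtain ⟨d, m, n, hd, hm, hn⟩ := exists_squarefree_mul_sq hB.ne' hr
  have hd0 : 0 < d := pos_of_mul_pos_left (hm ▸ hB) (sq_nonneg m)
  have hd12 := eq_one_or_eq_two_of_branchForm_eq h hd hd0 hm hn
  have heven := even_of_neg_weierstrassForm_eq hd12 hn (hodd b dvd_rfl hb)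
  have ha : Odd a := by
    refine Int.not_even_iff_odd.mp fun ha => ?_
    exact Int.prime_two.not_isUnit (h.isUnit_of_dvd' ha.two_dvd heven.two_dvd)
  obtain ⟨rfl, β, rfl⟩ := eq_one_and_four_dvd_of_branchForm_eq ha heven hd12 hm hn
  rw [one_mul] at hm hn
  have hβ := emod_eight_of_branchForm_eq_sq ha hm hn
  rcases Int.even_or_odd' β with ⟨γ, rfl | hγ⟩
  · have := hodd γ ⟨8, by ring⟩ (by omega) (Int.odd_iff.mpr (by omega))
    omega
  · have := hodd β ⟨4, by ring⟩ (by omega) ⟨γ, hγ⟩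
    omega

end Genus2

theorem branch_cubic_pos {X : ℚ} (h : 0 ≤ 4 * X ^ 3 - 4 * X ^ 2 - 28 * X + 41) :
    0 < 4 * X ^ 3 + 7 * X ^ 2 - 6 * X + 19 := by
  by_contra! hX
  have hq : X ^ 2 + 2 * X - 2 ≤ 0 := by linarith
  have hX4 : -4 < X := by nlinarith
  rcases lt_or_ge X (1 / 4) with hX' | hX'
  · nlinarith [mul_nonneg_of_nonpos_of_nonpos hq (by linarith : 4 * X - 1 ≤ 0)]
  · have : 0 ≤ X ^ 3 := by positivity
    nlinarith

theorem sq_ne_neg_branch_mul_weierstrass (X z : ℚ) :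
    z ^ 2 ≠ -((4 * X ^ 3 + 7 * X ^ 2 - 6 * X + 19) *
      (4 * (X ^ 3 - X ^ 2 - 7 * X + 10) + 1)) := by
  intro h
  have hb : (0 : ℤ) < X.den := mod_cast X.den_pos
  have hX : X * X.den = X.num := Rat.mul_den_eq_num X
  have hB : 0 < 4 * X ^ 3 + 7 * X ^ 2 - 6 * X + 19 := by
    by_contra! hB
    have hB0 : 4 * X ^ 3 + 7 * X ^ 2 - 6 * X + 19 ≠ 0 := fun h0 =>
      sq_ne_neg_branch_cubic X 0 (by rw [h0]; norm_num)
    refine hB.not_gt (branch_cubic_pos ?_)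
    by_contra! hA
    nlinarith [mul_pos_of_neg_of_neg (lt_of_le_of_ne hB hB0) hA, sq_nonneg z]
  have hBz : (branchForm X.num X.den : ℚ) =
      (4 * X ^ 3 + 7 * X ^ 2 - 6 * X + 19) * X.den ^ 3 := by
    simp only [branchForm]
    push_cast
    rw [← hX]
    ring
  have hB' : (0 : ℚ) < branchForm X.num X.den := by
    rw [hBz]
    have := X.den_pos
    positivity
  refine not_isSquare_branchForm_mul (Rat.isCoprime_num_den X) hb (mod_cast hB') ?_
  rw [← Rat.isSquare_intCast_iff]
  refine ⟨z * X.den ^ 3, ?_⟩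
  rw [Int.cast_mul, hBz]
  simp only [weierstrassForm]
  push_cast
  rw [← hX]
  linear_combination (-(X.den : ℚ) ^ 6) * h

end XNonsplit11

open XNonsplit11 in
/-- **Main theorem for p = 11.** Let `K` be a quadratic field (a field with a
`ℚ`-algebra structure which is 2-dimensional over `ℚ`). If `u, v, w ∈ K`
satisfy `v² + v = u³ - u² - 7u + 10` and `w² = -(4u³ + 7u² - 6u + 19)`
(the affine model of `X_ns(11)`), then `u` and `v` are rational. Hence every
quadratic point of `X_ns(11)` maps under the degeneracy map `(u,v,w) ↦ (u,v)`
to a rational point of `X_ns⁺(11)`, i.e. `X_ns(11)` has no exceptional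
quadratic points. -/
theorem no_exceptional_quadratic_points_Xns11
    (K : Type*) [Field K] [Algebra ℚ K] (hK : Module.finrank ℚ K = 2)
    (u v w : K)
    (h1 : v ^ 2 + v = u ^ 3 - u ^ 2 - 7 * u + 10)
    (h2 : w ^ 2 = -(4 * u ^ 3 + 7 * u ^ 2 - 6 * u + 19)) :
    u ∈ Set.range (algebraMap ℚ K) ∧ v ∈ Set.range (algebraMap ℚ K) := by
  have hu : u ∈ Set.range (algebraMap ℚ K) := by
    by_contra hu
    obtain ⟨X, t, ht⟩ := exists_sq_eq_cubic_of_notMem_range (w := w) (c₃ := -4) (c₂ := -7)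
      (c₁ := 6) (c₀ := -19) hK (by norm_num) hu (by
        simp only [map_neg, map_ofNat]
        linear_combination h2)
    exact sq_ne_neg_branch_cubic X t (by linear_combination ht)
  refine ⟨hu, ?_⟩
  obtain ⟨X, rfl⟩ := hu
  have hD : w ^ 2 = algebraMap ℚ K (-(4 * X ^ 3 + 7 * X ^ 2 - 6 * X + 19)) := by
    simpa only [map_neg, map_add, map_sub, map_mul, map_pow, map_ofNat] using h2
  have hE : v ^ 2 + v = algebraMap ℚ K (X ^ 3 - X ^ 2 - 7 * X + 10) := by
    simpa only [map_add, map_sub, map_mul, map_pow, map_ofNat] using h1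
  have hw : w ∉ Set.range (algebraMap ℚ K) := by
    rintro ⟨t, rfl⟩
    exact sq_ne_neg_branch_cubic X t ((algebraMap ℚ K).injective (by rw [map_pow, hD]))
  by_contra hv
  obtain ⟨z, hz⟩ := isSquare_mul_of_notMem_range hK hw hD hv hE
  exact sq_ne_neg_branch_mul_weierstrass X z (by linear_combination -hz)
end
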